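/- For every N ≥ 1 and every n ∈ ℕ, the following are equivalent: (1) there exists an ℝ-linear map B : ℝⁿ → M(N,ℂ) with B(v)ᴴ B(v) = ‖v‖² I_N for all v ∈ ℝⁿ; (2) there exists an ℝ-linear map B : ℝⁿ → M(N,ℂ) with B(v) invertible for every nonzero v; (3) n ≤ 2·ord₂(N) + 2. (Entry 𝔤 = 𝔰𝔲(N,N) of the Hurwitz–Radon value theorem, via the 𝔭-part consisting of block matrices [[0,B],[Bᴴ,0]]; it recovers the Adams–Lax–Phillips number ℂ(N).) -/

import Mathlib

open Matrix

open Matrix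

namespace HR

section Fred
open Module Topology
/-- algebraic Grushin lemma -/
theorem grushin {X Y V W : Type*} [AddCommGroup X] [Module ℂ X] [AddCommGroup Y] [Module ℂ Y]
    [AddCommGroup V] [Module ℂ V] [AddCommGroup W] [Module ℂ W]
    [FiniteDimensional ℂ V] [FiniteDimensional ℂ W]
    (f : X →ₗ[ℂ] Y) (a : W →ₗ[ℂ] Y) (b : X →ₗ[ℂ] V)
    (U : (X × W) ≃ₗ[ℂ] (Y × V)) (hU : ∀ x w, U (x, w) = (f x + a w, b x)) :
    (finrank ℂ (LinearMap.ker f) : ℤ) - finrank ℂ (Y ⧸ LinearMap.range f)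
      = finrank ℂ V - finrank ℂ W := by
  let E : V →ₗ[ℂ] W := LinearMap.snd ℂ X W ∘ₗ U.symm.toLinearMap ∘ₗ LinearMap.inr ℂ Y V
  let Em : Y →ₗ[ℂ] W := LinearMap.snd ℂ X W ∘ₗ U.symm.toLinearMap ∘ₗ LinearMap.inl ℂ Y V
  have hE : ∀ v, E v = (U.symm (0, v)).2 := fun v => rfl
  have hEm : ∀ y, Em y = (U.symm (y, 0)).2 := fun v => rfl
  have hEE : ∀ y v, (U.symm (y, v)).2 = Em y + E v := by
    intro y v
    rw [hE, hEm, ← Prod.snd_add, ← map_add]; simp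
  have key : ∀ y v, Em y + E v = 0 → f (U.symm (y, v)).1 = y ∧ b (U.symm (y,v)).1 = v := by
    intro y v h
    have h1 := U.apply_symm_apply (y, v)
    rw [← hEE] at h
    have h2 : U.symm (y, v) = ((U.symm (y,v)).1, 0) := by rw [← h]
    rw [h2, hU] at h1
    simpa using h1
  have key2 : ∀ x, Em (f x) + E (b x) = 0 := by
    intro x
    rw [← hEE]
    have : U (x, 0) = (f x, b x) := by simp [hU]
    rw [← this]; simp
  have e1 : LinearMap.ker f ≃ₗ[ℂ] LinearMap.ker E := by
    refine LinearEquiv.ofBijective (LinearMap.codRestrict _ (b ∘ₗ (LinearMap.ker f).subtype) ?_) ⟨?_, ?_⟩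
    · rintro ⟨x, hx⟩
      have hx' : f x = 0 := hx
      have := key2 x
      rw [hx'] at this
      simpa using this
    · rw [← LinearMap.ker_eq_bot, LinearMap.ker_eq_bot']
      rintro ⟨x, hx⟩ h
      have hx' : f x = 0 := hx
      have hb : b x = 0 := congrArg Subtype.val h
      have : U (x, 0) = 0 := by simp [hU, hx', hb]
      have := U.map_eq_zero_iff.1 this
      ext; simpa using this
    · rintro ⟨v, hv⟩
      have hv' : E v = 0 := hv
      obtain ⟨h1, h2⟩ := key 0 v (by simp [hv'])
      refine ⟨⟨(U.symm (0, v)).1, h1⟩, ?_⟩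
      ext; exact h2
  have e2 : (Y ⧸ LinearMap.range f) ≃ₗ[ℂ] (W ⧸ LinearMap.range E) := by
    let g : Y →ₗ[ℂ] (W ⧸ LinearMap.range E) := (LinearMap.range E).mkQ ∘ₗ Em
    have hg : LinearMap.ker g = LinearMap.range f := by
      ext y
      simp only [g, LinearMap.mem_ker, LinearMap.comp_apply, Submodule.mkQ_apply,
        Submodule.Quotient.mk_eq_zero, LinearMap.mem_range]
      constructor
      · rintro ⟨v, hv⟩
        exact ⟨_, (key y (-v) (by rw [map_neg, hv]; simp)).1⟩
      · rintro ⟨x, rfl⟩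
        refine ⟨-b x, ?_⟩
        rw [map_neg]
        have := key2 x
        exact (eq_neg_of_add_eq_zero_left this).symm
    have hs : Function.Surjective g := by
      intro q
      obtain ⟨w, rfl⟩ := Submodule.Quotient.mk_surjective _ q
      refine ⟨a w, ?_⟩
      simp only [g, LinearMap.comp_apply, Submodule.mkQ_apply]
      have : U (0, w) = (a w, 0) := by simp [hU]
      rw [hEm, ← this]; simp
    exact (Submodule.quotEquivOfEq _ _ hg.symm).trans (g.quotKerEquivOfSurjective hs)
  rw [e1.finrank_eq, e2.finrank_eq]
  have h1 := LinearMap.finrank_range_add_finrank_ker E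
  have h2 := Submodule.finrank_quotient_add_finrank (LinearMap.range E)
  omega

variable {X Y : Type*} [NormedAddCommGroup X] [InnerProductSpace ℂ X] [CompleteSpace X]
  [NormedAddCommGroup Y] [InnerProductSpace ℂ Y] [CompleteSpace Y]

/-- Fredholm-type operators between Hilbert spaces -/
structure Fr (S : X →L[ℂ] Y) : Prop where
  k : FiniteDimensional ℂ S.ker
  c : FiniteDimensional ℂ S.adjoint.ker
  r : IsClosed (S.range : Set Y)

/-- index -/
noncomputable def ind (S : X →L[ℂ] Y) : ℤ :=
  (finrank ℂ S.ker : ℤ) - finrank ℂ S.adjoint.ker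

theorem ind_adjoint (S : X →L[ℂ] Y) : ind S.adjoint = - ind S := by
  rw [ind, ind, ContinuousLinearMap.adjoint_adjoint]; ring

theorem ind_local {Θ : Type*} [TopologicalSpace Θ] (S : Θ → X →L[ℂ] Y) (hS : Continuous S)
    (hF : ∀ t, Fr (S t)) (t₀ : Θ) : ∀ᶠ t in 𝓝 t₀, ind (S t) = ind (S t₀) := by
  have : FiniteDimensional ℂ (S t₀).ker := (hF t₀).k
  have : FiniteDimensional ℂ (S t₀).adjoint.ker := (hF t₀).c
  let V := (S t₀).ker
  let W := (S t₀).adjoint.ker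
  let a : W →L[ℂ] Y := W.subtypeL
  let b : X →L[ℂ] V := V.orthogonalProjectionOnto
  let U : (X →L[ℂ] Y) → (X × W →L[ℂ] Y × V) := fun S =>
    (S.comp (ContinuousLinearMap.fst ℂ X W) + a.comp (ContinuousLinearMap.snd ℂ X W)).prod
      (b.comp (ContinuousLinearMap.fst ℂ X W))
  have hUc : Continuous U := by
    have h1 : Continuous fun S : X →L[ℂ] Y =>
      (S.comp (ContinuousLinearMap.fst ℂ X W) + a.comp (ContinuousLinearMap.snd ℂ X W)) := by
      fun_prop
    have h2 : Continuous fun p : (X × W →L[ℂ] Y) × (X × W →L[ℂ] V) => p.1.prod p.2 :=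
      (ContinuousLinearMap.prodₗᵢ ℂ).continuous
    exact h2.comp (h1.prodMk continuous_const)
  have hUa : ∀ S x w, U S (x, w) = (S x + a w, b x) := fun S x w => rfl
  have hrange : (S t₀).rangeᗮ = W := ContinuousLinearMap.orthogonal_range _
  have hr := (hF t₀).r
  have : CompleteSpace (S t₀).range := hr.completeSpace_coe
  have hinj : (U (S t₀)).ker = ⊥ := by
    rw [LinearMap.ker_eq_bot']
    rintro ⟨x, w⟩ h
    have h' : ((S t₀) x + a w, b x) = 0 := h
    simp only [Prod.mk_eq_zero] at h'
    obtain ⟨h1, h2⟩ := h'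
    have hw : (w : Y) ∈ (S t₀).rangeᗮ := by rw [hrange]; exact w.2
    have h3 : inner ℂ ((S t₀) x) (w : Y) = 0 := by
      rw [Submodule.mem_orthogonal] at hw
      exact hw _ ⟨x, rfl⟩
    have h4 : (S t₀) x = - (w : Y) := eq_neg_of_add_eq_zero_left h1
    have h5 : (w : Y) = 0 := by
      rw [h4, inner_neg_left, neg_eq_zero] at h3
      exact inner_self_eq_zero.1 h3
    have h6 : x ∈ V := by
      show (S t₀) x = 0
      rw [h4, h5]; simp
    have h7 : x = 0 := by
      have := Submodule.orthogonalProjectionOnto_mem_subspace_eq_self (K := V) ⟨x, h6⟩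
      have h8 : b x = ⟨x, h6⟩ := this
      rw [h2] at h8
      exact (congrArg Subtype.val h8).symm
    ext
    · exact h7
    · exact h5
  have hsur : (U (S t₀)).range = ⊤ := by
    rw [LinearMap.range_eq_top]
    rintro ⟨y, v⟩
    obtain ⟨y1, hy1, y2, hy2, rfl⟩ := (S t₀).range.exists_add_mem_mem_orthogonal y
    obtain ⟨x, rfl⟩ := hy1
    rw [hrange] at hy2
    refine ⟨(x - b x + v, ⟨y2, hy2⟩), ?_⟩
    show ((S t₀) (x - b x + v) + a ⟨y2, hy2⟩, b (x - b x + v)) = _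
    have e1 : (S t₀) (b x : X) = 0 := (b x).2
    have e2 : (S t₀) (v : X) = 0 := v.2
    have e3 : b (b x : X) = b x := Submodule.orthogonalProjectionOnto_mem_subspace_eq_self (K := V) (b x)
    have e4 : b (v : X) = v := Submodule.orthogonalProjectionOnto_mem_subspace_eq_self (K := V) v
    ext
    · simp [map_add, map_sub, e1, e2, a]
    · simp [map_add, map_sub, e3, e4]
  let e := ContinuousLinearEquiv.ofBijective (U (S t₀)) hinj hsur
  have he : (e : X × W →L[ℂ] Y × V) = U (S t₀) := by
    ext <;> rfl
  have hn := ContinuousLinearEquiv.nhds e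
  rw [he] at hn
  have hev : ∀ t : Θ, U (S t) ∈ Set.range ((↑) : ((X × W) ≃L[ℂ] (Y × V)) → X × W →L[ℂ] Y × V) →
      ind (S t) = finrank ℂ V - finrank ℂ W := by
    rintro t ⟨e', he'⟩
    have hr := (hF t).r
    have : CompleteSpace (S t).range := hr.completeSpace_coe
    have hh : ∀ x w, e' (x, w) = (S t x + a w, b x) := fun x w => by
      have h := DFunLike.congr_fun he' (x, w)
      exact h
    have hg := grushin (S t).toLinearMap a.toLinearMap b.toLinearMap e'.toLinearEquiv hh
    rw [ind, ← hg]
    congr 2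
    rw [((S t).range.quotientEquivOrthogonal).toLinearEquiv.finrank_eq,
      ContinuousLinearMap.orthogonal_range]
  filter_upwards [(hUc.comp hS).continuousAt.preimage_mem_nhds hn] with t ht
  rw [hev t ht, hev t₀ (mem_of_mem_nhds hn)]

theorem ind_path (S : ℝ → X →L[ℂ] Y) (hS : Continuous S)
    (hF : ∀ t, Fr (S t)) (s t : ℝ) : ind (S s) = ind (S t) := by
  have : IsLocallyConstant (fun t => ind (S t)) := by
    rw [IsLocallyConstant.iff_eventually_eq]
    exact fun x => ind_local S hS hF x
  exact this.apply_eq_of_preconnectedSpace _ _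

/-- half criterion -/
theorem half_fr {F : Type*} [NormedAddCommGroup F] [NormedSpace ℂ F] [FiniteDimensional ℂ F]
    (S : X →L[ℂ] Y) (R : X →L[ℂ] F) (C : ℝ) (h : ∀ u, ‖u‖ ≤ C * (‖S u‖ + ‖R u‖)) :
    FiniteDimensional ℂ S.ker ∧ IsClosed (S.range : Set Y) := by
  constructor
  · refine FiniteDimensional.of_injective (R.toLinearMap ∘ₗ S.ker.subtype) ?_
    rw [← LinearMap.ker_eq_bot, LinearMap.ker_eq_bot']
    rintro ⟨x, hx⟩ h0
    have h1 : S x = 0 := hx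
    have h2 : R x = 0 := h0
    have := h x
    rw [h1, h2] at this
    ext; simpa using this
  · have hco : (R.ker).CoFG := by
      have := R.toLinearMap.quotKerEquivRange
      exact Module.Finite.equiv this.symm
    refine LinearMap.isClosed_range_of_isClosed_map_of_finiteDimensional_quotient (s := R.ker) ?_
    have hc : IsClosed (R.ker : Set X) := R.isClosed_ker
    have : CompleteSpace R.ker := hc.completeSpace_coe
    have h2 : AntilipschitzWith (Real.toNNReal C) (S.comp R.ker.subtypeL) := by
      apply ContinuousLinearMap.antilipschitz_of_bound
      rintro ⟨x, hx⟩
      have h2 : R x = 0 := hx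
      have := h x
      rw [h2] at this
      simp only [norm_zero, add_zero] at this
      refine this.trans ?_
      gcongr
      exact Real.le_coe_toNNReal C
      rfl
    have h3 := h2.isClosed_range (S.comp R.ker.subtypeL).uniformContinuous
    convert h3 using 1
    ext y; simp
end Fred
end HR

open Matrix

namespace HR
section Moments
open MeasureTheory Measure Set
open scoped ComplexConjugate

theorem mom1 (a b : ℕ) : ∫ z : ℂ, conj (z ^ a) * z ^ b * (Real.exp (-‖z‖ ^ 2) : ℂ)
    = if a = b then (Real.pi * a.factorial : ℂ) else 0 := by
  split_ifs with h
  · subst h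
    have h1 := Complex.integral_rpow_mul_exp_neg_rpow (p := 2) (q := (2 * a : ℕ)) (by norm_num)
      (by have : (0:ℝ) ≤ ((2 * a : ℕ) : ℝ) := by positivity
          linarith)
    have h2 : ∀ z : ℂ, conj (z ^ a) * z ^ a * (Real.exp (-‖z‖ ^ 2) : ℂ)
        = ((‖z‖ ^ (((2 * a : ℕ) : ℝ)) * Real.exp (-‖z‖ ^ (2:ℝ)) : ℝ) : ℂ) := by
      intro z
      rw [Complex.conj_mul', Real.rpow_natCast]
      have : ‖z‖ ^ (2:ℝ) = ‖z‖ ^ 2 := by exact_mod_cast Real.rpow_natCast ‖z‖ 2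
      rw [this]
      push_cast
      rw [norm_pow]; push_cast; ring
    simp_rw [h2]
    rw [integral_complex_ofReal, h1]
    have : (((2 * a : ℕ) : ℝ) + 2) / 2 = a + 1 := by push_cast; ring
    rw [this, Real.Gamma_nat_eq_factorial]
    push_cast; ring
  · have hd : ((b : ℝ) - a) ≠ 0 := by
      rw [sub_ne_zero]; exact_mod_cast (Ne.symm h)
    let u : Circle := Circle.exp (Real.pi / (b - a))
    have hmp := (rotation u).measurePreserving
    have h3 := hmp.integral_comp (rotation u).toHomeomorph.measurableEmbedding
      (fun z : ℂ => conj (z ^ a) * z ^ b * (Real.exp (-‖z‖ ^ 2) : ℂ))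
    have hu : conj ((u : ℂ) ^ a) * (u : ℂ) ^ b = -1 := by
      have : (u : ℂ) = Complex.exp ((Real.pi / (b - a) : ℝ) * Complex.I) := Circle.coe_exp _
      rw [this, ← Complex.exp_nat_mul, ← Complex.exp_nat_mul, ← Complex.exp_conj, ← Complex.exp_add,
        ← Complex.exp_pi_mul_I]
      congr 1
      have hd' : ((b : ℂ) - a) ≠ 0 := by exact_mod_cast hd
      simp only [map_mul, map_natCast, Complex.conj_I, Complex.conj_ofReal]
      push_cast
      field_simp
      ring
    have h4 : ∀ z : ℂ, (fun z : ℂ => conj (z ^ a) * z ^ b * (Real.exp (-‖z‖ ^ 2) : ℂ)) (rotation u z)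
        = - (conj (z ^ a) * z ^ b * (Real.exp (-‖z‖ ^ 2) : ℂ)) := by
      intro z
      simp only [rotation_apply, mul_pow, map_mul, norm_mul, Circle.norm_coe, one_mul]
      linear_combination (conj (z ^ a) * z ^ b * (Real.exp (-‖z‖ ^ 2) : ℂ)) * hu
    simp_rw [h4] at h3
    rw [integral_neg] at h3
    have h5 : ∀ x : ℂ, -x = x → x = 0 := by
      intro x hx
      have : 2 * x = 0 := by linear_combination -hx
      simpa using this
    exact h5 _ h3

/-- radial integral -/
theorem polar {E : Type*} [NormedAddCommGroup E] [NormedSpace ℝ E] [MeasurableSpace E]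
    [Nontrivial E] (μ : Measure E) [FiniteDimensional ℝ E] [BorelSpace E] [μ.IsAddHaarMeasure]
    (f : E → ℂ) (k d : ℕ) (hd : Module.finrank ℝ E = d + 1)
    (hf : ∀ (r : ℝ) (x : E), 0 < r → f (r • x) = (r : ℂ) ^ k * f x) :
    ∫ x, f x * (Real.exp (-‖x‖ ^ 2) : ℂ) ∂μ =
      (∫ s, f (s : E) ∂μ.toSphere) * ((1 / 2) * Real.Gamma ((k + d + 1 : ℝ) / 2) : ℝ) :=
  calc
    ∫ x, f x * (Real.exp (-‖x‖ ^ 2) : ℂ) ∂μ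
      = ∫ x : ({(0)}ᶜ : Set E), f x * (Real.exp (-‖(x:E)‖ ^ 2) : ℂ) ∂(μ.comap (↑)) := by
      rw [integral_subtype_comap (measurableSet_singleton _).compl
        fun x => f x * (Real.exp (-‖x‖ ^ 2) : ℂ), restrict_compl_singleton]
    _ = ∫ x, f (x.1 : E) * ((x.2 : ℝ) ^ k * Real.exp (-(x.2 : ℝ) ^ 2) : ℝ)
          ∂μ.toSphere.prod (.volumeIoiPow (Module.finrank ℝ E - 1)) := by
      rw [← μ.measurePreserving_homeomorphUnitSphereProd.integral_comp
        (Homeomorph.measurableEmbedding _)]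
      congr 1
      ext x
      have hx : 0 < ‖(x : E)‖ := norm_pos_iff.2 x.2
      rw [homeomorphUnitSphereProd_apply_fst_coe, homeomorphUnitSphereProd_apply_snd_coe,
        hf _ _ (inv_pos.2 hx)]
      push_cast
      have : (‖(x:E)‖ : ℂ) ≠ 0 := by exact_mod_cast hx.ne'
      have h2 : ((‖(x:E)‖ : ℂ)⁻¹) ^ k * (‖(x:E)‖ : ℂ) ^ k = 1 := by
        rw [← mul_pow, inv_mul_cancel₀ this, one_pow]
      linear_combination (-(f x) * Complex.exp (-(‖(x:E)‖:ℂ) ^ 2)) * h2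
    _ = (∫ s, f (s : E) ∂μ.toSphere) * ∫ r : Ioi (0:ℝ), (((r : ℝ) ^ k * Real.exp (-(r : ℝ) ^ 2) : ℝ) : ℂ)
          ∂.volumeIoiPow (Module.finrank ℝ E - 1) :=
      integral_prod_mul (fun s : Metric.sphere (0:E) 1 => f s)
        (fun r : Ioi (0:ℝ) => (((r : ℝ) ^ k * Real.exp (-(r : ℝ) ^ 2) : ℝ) : ℂ))
    _ = _ := by
      congr 1
      rw [integral_complex_ofReal, hd]
      congr 1
      simp only [Measure.volumeIoiPow, ENNReal.ofReal, Nat.add_sub_cancel]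
      rw [integral_withDensity_eq_integral_smul,
        integral_subtype_comap measurableSet_Ioi fun a : ℝ =>
          Real.toNNReal (a ^ d) • (a ^ k * Real.exp (- a ^ 2)),
        setIntegral_congr_fun (g := fun x : ℝ => x ^ ((k + d : ℕ) : ℝ) * Real.exp (- x ^ (2:ℝ)))
          measurableSet_Ioi fun x hx ↦ ?_]
      · rw [integral_rpow_mul_exp_neg_rpow (by norm_num)]
        · push_cast; rfl
        · have : (0:ℝ) ≤ ((k + d : ℕ) : ℝ) := by positivity
          linarith
      · simp only
        rw [NNReal.smul_def, Real.coe_toNNReal _ (pow_nonneg hx.out.le _), Real.rpow_natCast, pow_add]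
        have : x ^ (2:ℝ) = x ^ 2 := by exact_mod_cast Real.rpow_natCast x 2
        rw [this, smul_eq_mul]; ring
      · exact (measurable_subtype_coe.pow_const _).real_toNNReal

abbrev Sph (m : ℕ) := Metric.sphere (0 : EuclideanSpace ℂ (Fin m)) 1

theorem exists_measure (m : ℕ) (hm : 0 < m) : ∃ ν : Measure (Sph m), IsFiniteMeasure ν ∧
    ∃ w : (Fin m → ℕ) → ℝ, (∀ α, 0 < w α) ∧
      (∀ α j, w (α + Pi.single j 1) * ((∑ i, α i : ℕ) + m) = (α j + 1) * w α) ∧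
      ∀ α β, ∫ s : Sph m, conj (∏ j, (s : EuclideanSpace ℂ (Fin m)) j ^ α j) *
        ∏ j, (s : EuclideanSpace ℂ (Fin m)) j ^ β j ∂ν = if α = β then (w α : ℂ) else 0 := by
  obtain ⟨d, rfl⟩ : ∃ d, m = d + 1 := ⟨m - 1, by omega⟩
  let L := (EuclideanSpace.equiv (Fin (d+1)) ℂ).symm
  let μ : Measure (EuclideanSpace ℂ (Fin (d+1))) := Measure.map L volume
  have : μ.IsAddHaarMeasure := L.isAddHaarMeasure_map _
  have hfin : Module.finrank ℝ (EuclideanSpace ℂ (Fin (d+1))) = (2 * d + 1) + 1 := by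
    rw [← (WithLp.linearEquiv 2 ℝ (Fin (d+1) → ℂ)).symm.finrank_eq]
    rw [Module.finrank_pi_fintype]
    simp; ring
  let P : (Fin (d+1) → ℕ) → EuclideanSpace ℂ (Fin (d+1)) → ℂ := fun α s => ∏ j, s j ^ α j
  have key : ∀ α β, (∫ s : Sph (d+1), conj (P α s) * P β s ∂μ.toSphere) *
      ((1 / 2) * Real.Gamma (((∑ i, α i + ∑ i, β i : ℕ) + (2 * d + 1 : ℕ) + 1 : ℝ) / 2) : ℝ)
      = ∏ j, if α j = β j then (Real.pi * (α j).factorial : ℂ) else 0 := by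
    intro α β
    rw [← polar μ (fun x => conj (P α x) * P β x) _ _ hfin]
    · simp_rw [← mom1]
      rw [← integral_fintype_prod_volume_eq_prod
        (fun j (z : ℂ) => conj (z ^ α j) * z ^ β j * (Real.exp (-‖z‖ ^ 2) : ℂ))]
      show ∫ x, _ ∂(Measure.map L volume) = _
      rw [MeasurableEmbedding.integral_map (f := L) L.toHomeomorph.measurableEmbedding]
      congr 1
      ext x
      have hx : ∀ j, (L x) j = x j := fun j => rfl
      have hn : ‖L x‖ ^ 2 = ∑ j, ‖x j‖ ^ 2 := EuclideanSpace.norm_sq_eq _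
      show conj (P α (L x)) * P β (L x) * (Real.exp (-‖L x‖ ^ 2) : ℂ) = _
      rw [hn]
      simp only [P, hx, Finset.prod_mul_distrib, map_prod]
      rw [← Finset.sum_neg_distrib, Real.exp_sum]
      push_cast; rfl
    · intro r x hr
      have hP : ∀ α, P α (r • x) = (r : ℂ) ^ (∑ i, α i) * P α x := by
        intro α
        simp only [P, PiLp.smul_apply, Complex.real_smul, mul_pow, Finset.prod_mul_distrib]
        rw [Finset.prod_pow_eq_pow_sum]
      rw [hP, hP, map_mul, map_pow, Complex.conj_ofReal, pow_add]; ring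
  have hG : ∀ α β : Fin (d+1) → ℕ, (0:ℝ) < (1 / 2) * Real.Gamma (((∑ i, α i + ∑ i, β i : ℕ) + (2 * d + 1 : ℕ) + 1 : ℝ) / 2) := by
    intro α β
    have := Real.Gamma_pos_of_pos (s := (((∑ i, α i + ∑ i, β i : ℕ) + (2 * d + 1 : ℕ) + 1 : ℝ) / 2)) (by positivity)
    positivity
  have hG2 : ∀ α : Fin (d+1) → ℕ, ((∑ i, α i + ∑ i, α i : ℕ) + (2 * d + 1 : ℕ) + 1 : ℝ) / 2 = (∑ i, α i + d : ℕ) + 1 := by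
    intro α; push_cast; ring
  let w : (Fin (d+1) → ℕ) → ℝ := fun α => (∏ j, (Real.pi * (α j).factorial)) / ((1/2) * (∑ i, α i + d).factorial)
  refine ⟨μ.toSphere, inferInstance, w, ?_, ?_, ?_⟩
  · intro α
    have := Real.pi_pos
    apply div_pos
    · exact Finset.prod_pos fun j _ => by positivity
    · positivity
  · intro α j
    simp only [w]
    have e1 : ∑ i, (α + Pi.single j 1 : Fin (d+1) → ℕ) i = ∑ i, α i + 1 := by
      simp [Finset.sum_add_distrib]
    have e2 : (∏ i, (Real.pi * ((α + Pi.single j 1 : Fin (d+1) → ℕ) i).factorial : ℝ)) = (α j + 1) * ∏ i, (Real.pi * (α i).factorial : ℝ) := by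
      rw [← Finset.mul_prod_erase _ _ (Finset.mem_univ j), ← Finset.mul_prod_erase Finset.univ (fun i => (Real.pi * (α i).factorial : ℝ)) (Finset.mem_univ j)]
      rw [Finset.prod_congr rfl (g := fun i => (Real.pi * (α i).factorial : ℝ))]
      · simp [Nat.factorial_succ]; ring
      · intro i hi
        simp [Finset.ne_of_mem_erase hi]
    rw [e1, e2, show ∑ i, α i + 1 + d = (∑ i, α i + d) + 1 by ring, Nat.factorial_succ]
    have h1 : ((∑ i, α i + d).factorial : ℝ) ≠ 0 := by positivity
    have h2 : ((∑ i, α i : ℕ) : ℝ) + d + 1 ≠ 0 := by positivity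
    push_cast at h1 h2 ⊢
    field_simp
    ring
  · intro α β
    have h := key α β
    split_ifs with hab
    · subst hab
      rw [hG2, Real.Gamma_nat_eq_factorial] at h
      have h0 : (((1/2 : ℝ) * (∑ i, α i + d).factorial : ℝ) : ℂ) ≠ 0 := by
        have : (0:ℝ) < (1/2 : ℝ) * (∑ i, α i + d).factorial := by positivity
        exact_mod_cast this.ne'
      simp only [if_true] at h
      rw [← eq_div_iff h0] at h
      refine h.trans ?_
      simp only [w]
      push_cast; rfl
    · have h0 := (hG α β).ne'
      obtain ⟨j, hj⟩ : ∃ j, α j ≠ β j := by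
        by_contra hc; push Not at hc; exact hab (funext hc)
      rw [Finset.prod_eq_zero (Finset.mem_univ j) (by simp [hj])] at h
      rcases mul_eq_zero.1 h with h | h
      · exact h
      · exact absurd (by exact_mod_cast h) h0
end Moments
end HR

open Matrix

namespace HR
section Hardy
open MeasureTheory Measure Set
open scoped ComplexConjugate ENNReal

/-- multiplication operator -/
noncomputable def mulL {S : Type*} [TopologicalSpace S] [CompactSpace S] [MeasurableSpace S]
    [BorelSpace S] (ν : Measure S) [IsFiniteMeasure ν] (g : C(S, ℂ)) : Lp ℂ 2 ν →L[ℂ] Lp ℂ 2 ν :=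
  (ContinuousLinearMap.mul ℂ ℂ).holderL ν ∞ 2 2 (ContinuousMap.toLp ∞ ν ℂ g)

section
variable {S : Type*} [TopologicalSpace S] [CompactSpace S] [MeasurableSpace S]
    [BorelSpace S] (ν : Measure S) [IsFiniteMeasure ν]

theorem mulL_ae (g : C(S, ℂ)) (f : Lp ℂ 2 ν) : mulL ν g f =ᵐ[ν] fun x => g x * f x := by
  have h1 := ContinuousLinearMap.coeFn_holder (r := 2) (ContinuousLinearMap.mul ℂ ℂ)
    (ContinuousMap.toLp ∞ ν ℂ g) f
  have h2 := ContinuousMap.coeFn_toLp (p := ∞) (𝕜 := ℂ) ν g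
  refine Filter.EventuallyEq.trans h1 ?_
  filter_upwards [h2] with x hx
  rw [hx]; rfl

theorem mulL_inner (g : C(S, ℂ)) (f h : Lp ℂ 2 ν) :
    inner ℂ (mulL ν (star g) f) h = inner ℂ f (mulL ν g h) := by
  rw [L2.inner_def, L2.inner_def]
  apply integral_congr_ae
  filter_upwards [mulL_ae ν (star g) f, mulL_ae ν g h] with x h1 h2
  rw [h1, h2]
  simp
  ring
end

noncomputable abbrev ell (m : ℕ) := lp (fun _ : Fin m → ℕ => ℂ) 2

/-- basis vector -/
noncomputable def bas {m : ℕ} (α : Fin m → ℕ) : ell m := lp.single 2 α (1 : ℂ)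

/-- shift coefficients -/
noncomputable def cc {m : ℕ} (j : Fin m) (α : Fin m → ℕ) : ℝ :=
  Real.sqrt (((α j : ℝ) + 1) / ((∑ i, α i : ℕ) + m))

noncomputable def coord {m : ℕ} (j : Fin m) : C(Sph m, ℂ) where
  toFun s := (s : EuclideanSpace ℂ (Fin m)) j
  continuous_toFun := by fun_prop

theorem exists_hardy (m : ℕ) (hm : 0 < m) : ∃ (ν : Measure (Sph m)) (_ : IsFiniteMeasure ν)
    (V : ell m →ₗᵢ[ℂ] Lp ℂ 2 ν) (Z : Fin m → ell m →L[ℂ] ell m),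
    (∀ j α, Z j (bas α) = (cc j α : ℂ) • bas (α + Pi.single j 1)) ∧
    ∀ j u, mulL ν (coord j) (V u) = V (Z j u) := by
  obtain ⟨ν, hν, w, w0, wr, hw⟩ := exists_measure m hm
  let p : (Fin m → ℕ) → C(Sph m, ℂ) := fun α =>
    ⟨fun s => ∏ j, (s : EuclideanSpace ℂ (Fin m)) j ^ α j, by fun_prop⟩
  have hp : ∀ α s, p α s = ∏ j, (s : EuclideanSpace ℂ (Fin m)) j ^ α j := fun _ _ => rfl
  let φ : (Fin m → ℕ) → Lp ℂ 2 ν := fun α =>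
    ((Real.sqrt (w α))⁻¹ : ℂ) • ContinuousMap.toLp 2 ν ℂ (p α)
  have hin : ∀ α β, inner ℂ (ContinuousMap.toLp 2 ν ℂ (p α)) (ContinuousMap.toLp 2 ν ℂ (p β))
      = if α = β then (w α : ℂ) else 0 := by
    intro α β
    rw [L2.inner_def, ← hw α β]
    apply integral_congr_ae
    filter_upwards [ContinuousMap.coeFn_toLp (p := 2) (𝕜 := ℂ) ν (p α),
      ContinuousMap.coeFn_toLp (p := 2) (𝕜 := ℂ) ν (p β)] with x h1 h2
    rw [h1, h2, hp, hp]
    simp [mul_comm]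
  have hφ : Orthonormal ℂ φ := by
    rw [orthonormal_iff_ite]
    intro α β
    simp only [φ, inner_smul_left, inner_smul_right, hin]
    split_ifs with h
    · subst h
      have h1 : (Real.sqrt (w α) : ℂ) ≠ 0 := by
        exact_mod_cast (Real.sqrt_pos.2 (w0 α)).ne'
      have h2 : (Real.sqrt (w α) : ℂ) * (Real.sqrt (w α) : ℂ) = w α := by
        exact_mod_cast Real.mul_self_sqrt (w0 α).le
      rw [← h2]
      simp only [map_inv₀, Complex.conj_ofReal]
      field_simp
    · simp
  let V := hφ.orthogonalFamily.linearIsometry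
  have hV : ∀ α, V (bas α) = φ α := by
    intro α
    have := hφ.orthogonalFamily.linearIsometry_apply_single (i := α) (1 : ℂ)
    rw [bas]
    refine this.trans ?_
    simp
  have hM : ∀ j α, mulL ν (coord j) (φ α) = (cc j α : ℂ) • φ (α + Pi.single j 1) := by
    intro j α
    have hc : (cc j α : ℝ) * (Real.sqrt (w (α + Pi.single j 1)))⁻¹ = (Real.sqrt (w α))⁻¹ := by
      have h1 : w (α + Pi.single j 1) = (((α j : ℝ) + 1) / ((∑ i, α i : ℕ) + m)) * w α := by
        have : (0:ℝ) < (∑ i, α i : ℕ) + m := by positivity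
        rw [div_mul_eq_mul_div, eq_div_iff this.ne', wr]
      rw [h1, Real.sqrt_mul (by positivity), cc]
      have : 0 < Real.sqrt (((α j : ℝ) + 1) / ((∑ i, α i : ℕ) + m)) := by positivity
      field_simp
    have e1 : mulL ν (coord j) (ContinuousMap.toLp 2 ν ℂ (p α)) = ContinuousMap.toLp 2 ν ℂ (p (α + Pi.single j 1)) := by
      apply Lp.ext
      filter_upwards [mulL_ae ν (coord j) (ContinuousMap.toLp 2 ν ℂ (p α)),
        ContinuousMap.coeFn_toLp (p := 2) (𝕜 := ℂ) ν (p α),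
        ContinuousMap.coeFn_toLp (p := 2) (𝕜 := ℂ) ν (p (α + Pi.single j 1))] with x h1 h2 h3
      rw [h1, h2, h3, hp, hp]
      simp only [Pi.add_apply, pow_add, Finset.prod_mul_distrib]
      rw [Finset.prod_eq_single (f := fun i => (x : EuclideanSpace ℂ (Fin m)) i ^ (Pi.single j 1 : Fin m → ℕ) i) j]
      · simp [coord, mul_comm]
      · intro b _ hb; simp [hb]
      · simp
    simp only [φ, map_smul, e1, smul_smul]
    congr 1
    exact_mod_cast hc.symm
  let Z : Fin m → ell m →L[ℂ] ell m := fun j =>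
    (V.toContinuousLinearMap.adjoint).comp ((mulL ν (coord j)).comp V.toContinuousLinearMap)
  have hVV : ∀ u, V.toContinuousLinearMap.adjoint (V u) = u := by
    intro u
    refine ext_inner_left ℂ fun v => ?_
    rw [ContinuousLinearMap.adjoint_inner_right]
    exact V.inner_map_map v u
  have hZ : ∀ j α, Z j (bas α) = (cc j α : ℂ) • bas (α + Pi.single j 1) := by
    intro j α
    show V.toContinuousLinearMap.adjoint (mulL ν (coord j) (V (bas α))) = _
    rw [hV, hM, ← hV, map_smul, hVV]
  refine ⟨ν, hν, V, Z, hZ, ?_⟩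
  intro j u
  have : (mulL ν (coord j)).comp V.toContinuousLinearMap = V.toContinuousLinearMap.comp (Z j) := by
    refine lp.ext_continuousLinearMap (by simp) fun α => ?_
    refine ContinuousLinearMap.ext_ring ?_
    show mulL ν (coord j) (V (bas α)) = V (Z j (bas α))
    rw [hZ, map_smul, hV, hV, hM]
  exact DFunLike.congr_fun this u
end Hardy
end HR

open Matrix

namespace HR
set_option linter.unusedSectionVars false
section Graded
open Module
variable {H : Type*} [NormedAddCommGroup H] [InnerProductSpace ℂ H] [CompleteSpace H]

/-- graded index -/
noncomputable def gind (P T : H →L[ℂ] H) : ℤ :=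
  (finrank ℂ ↥(T.ker ⊓ (P - 1).ker) : ℤ) - finrank ℂ ↥(T.adjoint.ker ⊓ (P + 1).ker)

theorem mem_ev {P : H →L[ℂ] H} {u : H} : u ∈ (P - 1).ker ↔ P u = u := by
  rw [LinearMap.mem_ker]
  show P u - u = 0 ↔ _
  exact sub_eq_zero

theorem mem_od {P : H →L[ℂ] H} {u : H} : u ∈ (P + 1).ker ↔ P u = -u := by
  rw [LinearMap.mem_ker]
  show P u + u = 0 ↔ _
  exact add_eq_zero_iff_eq_neg

theorem split_ker (P T : H →L[ℂ] H) (hP : P * P = 1) (hT : T * P = - (P * T))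
    [FiniteDimensional ℂ T.ker] :
    finrank ℂ T.ker = finrank ℂ ↥(T.ker ⊓ (P - 1).ker) + finrank ℂ ↥(T.ker ⊓ (P + 1).ker) := by
  have hPP : ∀ u, P (P u) = u := fun u => DFunLike.congr_fun hP u
  have hTP : ∀ u, T (P u) = - P (T u) := fun u => DFunLike.congr_fun hT u
  have h1 : (T.ker ⊓ (P - 1).ker) ⊔ (T.ker ⊓ (P + 1).ker) = T.ker := by
    apply le_antisymm (sup_le inf_le_left inf_le_left)
    intro u hu
    have hu' : T u = 0 := hu
    have : u = (1/2 : ℂ) • (u + P u) + (1/2 : ℂ) • (u - P u) := by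
      module
    rw [this]
    refine Submodule.add_mem_sup ⟨?_, ?_⟩ ⟨?_, ?_⟩
    · show T _ = 0
      simp [hTP, hu']
    · exact mem_ev.2 (by simp [hPP, add_comm])
    · show T _ = 0
      simp [hTP, hu']
    · exact mem_od.2 (by rw [map_smul, map_sub, hPP]; module)
  have h2 : (T.ker ⊓ (P - 1).ker) ⊓ (T.ker ⊓ (P + 1).ker) = ⊥ := by
    rw [eq_bot_iff]
    rintro u ⟨⟨_, hu⟩, ⟨_, hv⟩⟩
    have hu := mem_ev.1 hu
    have hv := mem_od.1 hv
    rw [hu] at hv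
    have : (2:ℂ) • u = 0 := by rw [two_smul]; nth_rewrite 1 [hv]; simp
    simpa using this
  have : FiniteDimensional ℂ ↥(T.ker ⊓ (P - 1).ker) :=
    Submodule.finiteDimensional_of_le inf_le_left
  have : FiniteDimensional ℂ ↥(T.ker ⊓ (P + 1).ker) :=
    Submodule.finiteDimensional_of_le inf_le_left
  have h3 := Submodule.finrank_sup_add_finrank_inf_eq (T.ker ⊓ (P - 1).ker) (T.ker ⊓ (P + 1).ker)
  rw [h1, h2, finrank_bot] at h3
  omega

theorem odd_adjoint {P T : H →L[ℂ] H} (hPa : P.adjoint = P) (hT : T * P = - (P * T)) :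
    T.adjoint * P = - (P * T.adjoint) := by
  have := congrArg ContinuousLinearMap.adjoint hT
  have h2 : (T.comp P).adjoint = - (P.comp T).adjoint := by
    rw [← map_neg]; exact this
  rw [ContinuousLinearMap.adjoint_comp, ContinuousLinearMap.adjoint_comp, hPa] at h2
  have h3 : P * T.adjoint = - (T.adjoint * P) := h2
  rw [h3, neg_neg]

theorem ind_split (P T : H →L[ℂ] H) (hPa : P.adjoint = P) (hP : P * P = 1)
    (hT : T * P = - (P * T)) (hF : Fr T) : ind T = gind P T - gind P T.adjoint := by
  have := hF.k
  have := hF.c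
  rw [ind, gind, gind, split_ker P T hP hT,
    split_ker P T.adjoint hP (odd_adjoint hPa hT), ContinuousLinearMap.adjoint_adjoint]
  push_cast; ring

theorem gind_path (P : H →L[ℂ] H) (hPa : P.adjoint = P) (hP : P * P = 1)
    (T : ℝ → H →L[ℂ] H) (hc : Continuous T) (hT : ∀ t, T t * P = - (P * T t))
    (hF : ∀ t, Fr (T t)) (s t : ℝ) : gind P (T s) = gind P (T t) := by
  have hPP : ∀ u, P (P u) = u := fun u => DFunLike.congr_fun hP u
  have cE : IsClosed ((P - 1).ker : Set H) := (P - 1).isClosed_ker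
  have cO : IsClosed ((P + 1).ker : Set H) := (P + 1).isClosed_ker
  have : CompleteSpace (P - 1).ker := cE.completeSpace_coe
  have : CompleteSpace (P + 1).ker := cO.completeSpace_coe
  let S : (H →L[ℂ] H) → ((P - 1).ker →L[ℂ] (P + 1).ker) := fun T =>
    ((P + 1).ker.orthogonalProjectionOnto).comp (T.comp (P - 1).ker.subtypeL)
  have hSc : Continuous S := by
    simp only [S]; fun_prop
  have hSadj : ∀ T, (S T).adjoint =
      ((P - 1).ker.orthogonalProjectionOnto).comp (T.adjoint.comp (P + 1).ker.subtypeL) := by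
    intro T
    simp only [S, ContinuousLinearMap.adjoint_comp]
    rw [Submodule.adjoint_orthogonalProjectionOnto, Submodule.adjoint_subtypeL]
    rfl
  have gen : ∀ (T : H →L[ℂ] H), T * P = - (P * T) → ∀ u : (P - 1).ker, ((S T u : (P + 1).ker) : H) = T u := by
    intro T hT u
    have hTP : ∀ u, T (P u) = - P (T u) := fun u => DFunLike.congr_fun hT u
    have hu := mem_ev.1 u.2
    have h1 : T u ∈ (P + 1).ker := mem_od.2 (by
      have := hTP u
      rw [hu] at this
      exact (neg_eq_iff_eq_neg.2 this).symm)
    have := Submodule.orthogonalProjectionOnto_mem_subspace_eq_self (K := (P + 1).ker) ⟨T u, h1⟩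
    exact congrArg Subtype.val this
  have gen' : ∀ (T : H →L[ℂ] H), T * P = - (P * T) → ∀ u : (P + 1).ker, (((S T).adjoint u : (P - 1).ker) : H) = T.adjoint u := by
    intro T hT u
    have hTP : ∀ u, T.adjoint (P u) = - P (T.adjoint u) :=
      fun u => DFunLike.congr_fun (odd_adjoint hPa hT) u
    have hu := mem_od.1 u.2
    have h1 : T.adjoint u ∈ (P - 1).ker := mem_ev.2 (by
      have := hTP u
      rw [hu, map_neg] at this
      exact (neg_injective this).symm)
    have := Submodule.orthogonalProjectionOnto_mem_subspace_eq_self (K := (P - 1).ker) ⟨T.adjoint u, h1⟩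
    rw [hSadj]
    exact congrArg Subtype.val this
  have km : ∀ t, (S (T t)).ker.map (P - 1).ker.subtype = (T t).ker ⊓ (P - 1).ker := by
    intro t
    ext u
    constructor
    · rintro ⟨v, hv, rfl⟩
      refine ⟨?_, v.2⟩
      have hv' : S (T t) v = 0 := hv
      have := gen (T t) (hT t) v
      rw [hv'] at this
      exact this.symm
    · rintro ⟨h1, h2⟩
      refine ⟨⟨u, h2⟩, ?_, rfl⟩
      show S (T t) _ = 0
      ext
      rw [gen (T t) (hT t)]
      exact h1
  have km' : ∀ t, (S (T t)).adjoint.ker.map (P + 1).ker.subtype = (T t).adjoint.ker ⊓ (P + 1).ker := by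
    intro t
    ext u
    constructor
    · rintro ⟨v, hv, rfl⟩
      refine ⟨?_, v.2⟩
      have hv' : (S (T t)).adjoint v = 0 := hv
      have := gen' (T t) (hT t) v
      rw [hv'] at this
      exact this.symm
    · rintro ⟨h1, h2⟩
      refine ⟨⟨u, h2⟩, ?_, rfl⟩
      show (S (T t)).adjoint _ = 0
      ext
      rw [gen' (T t) (hT t)]
      exact h1
  have hFS : ∀ t, Fr (S (T t)) := by
    intro t
    have := (hF t).k
    have := (hF t).c
    refine ⟨?_, ?_, ?_⟩
    · have : FiniteDimensional ℂ ↥((S (T t)).ker.map (P - 1).ker.subtype) := by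
        rw [km]; exact Submodule.finiteDimensional_of_le inf_le_left
      exact FiniteDimensional.of_injective ((Submodule.equivSubtypeMap _ _).toLinearMap)
        (Submodule.equivSubtypeMap _ _).injective
    · have : FiniteDimensional ℂ ↥((S (T t)).adjoint.ker.map (P + 1).ker.subtype) := by
        rw [km']; exact Submodule.finiteDimensional_of_le inf_le_left
      exact FiniteDimensional.of_injective ((Submodule.equivSubtypeMap _ _).toLinearMap)
        (Submodule.equivSubtypeMap _ _).injective
    · have : ((S (T t)).range : Set (P + 1).ker) = Subtype.val ⁻¹' ((T t).range : Set H) := by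
        have hTP : ∀ u, T t (P u) = - P (T t u) := fun u => DFunLike.congr_fun (hT t) u
        ext v
        constructor
        · rintro ⟨u, rfl⟩
          exact ⟨u, (gen (T t) (hT t) u).symm⟩
        · rintro ⟨u, hu⟩
          have hu' : T t u = v := hu
          have hv := mem_od.1 v.2
          refine ⟨⟨(1/2 : ℂ) • (u + P u), mem_ev.2 (by simp [hPP, add_comm])⟩, ?_⟩
          ext
          refine (gen (T t) (hT t) _).trans ?_
          simp only
          rw [map_smul, map_add, hTP, hu', hv]
          module
      rw [this]
      exact (hF t).r.preimage continuous_subtype_val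
  have hg : ∀ t, gind P (T t) = ind (S (T t)) := by
    intro t
    rw [gind, ind, ← km, ← km', Submodule.finrank_map_subtype_eq, Submodule.finrank_map_subtype_eq]
  rw [hg, hg]
  exact ind_path (fun t => S (T t)) (hSc.comp hc) hFS s t
end Graded

section Op
variable {H : Type*} [NormedAddCommGroup H] [InnerProductSpace ℂ H] [CompleteSpace H]
variable {κ : Type*} [Fintype κ] [DecidableEq κ]

/-- matrix of operators acting -/
noncomputable def op (A : Matrix κ κ (H →L[ℂ] H)) :
    PiLp 2 (fun _ : κ => H) →L[ℂ] PiLp 2 (fun _ : κ => H) :=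
  ∑ k, ∑ l, ((PiLp.continuousLinearEquiv 2 ℂ (fun _ : κ => H)).symm.toContinuousLinearMap.comp
    (ContinuousLinearMap.single ℂ (fun _ : κ => H) k)).comp
      ((A k l).comp (PiLp.proj 2 (fun _ : κ => H) l))

theorem op_apply (A : Matrix κ κ (H →L[ℂ] H)) (u : PiLp 2 (fun _ : κ => H)) (k : κ) :
    op A u k = ∑ l, A k l (u l) := by
  simp only [op, _root_.sum_apply, ContinuousLinearMap.comp_apply]
  rw [WithLp.ofLp_sum, Finset.sum_apply, Finset.sum_eq_single k]
  · rw [WithLp.ofLp_sum, Finset.sum_apply]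
    exact Finset.sum_congr rfl fun l _ => by simp
  · intro b _ hb
    rw [WithLp.ofLp_sum, Finset.sum_apply]
    exact Finset.sum_eq_zero fun l _ => by simp [hb]
  · simp

theorem op_continuous {Θ : Type*} [TopologicalSpace Θ] (A : Θ → Matrix κ κ (H →L[ℂ] H))
    (hA : ∀ k l, Continuous fun t => A t k l) : Continuous fun t => op (A t) := by
  simp only [op]
  refine continuous_finsetSum _ fun k _ => continuous_finsetSum _ fun l _ => ?_
  have := hA k l
  fun_prop

theorem op_mul (A B : Matrix κ κ (H →L[ℂ] H)) : op (A * B) = op A * op B := by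
  ext u k
  show op (A * B) u k = op A (op B u) k
  simp only [op_apply, Matrix.mul_apply, _root_.sum_apply, map_sum]
  rw [Finset.sum_comm]; rfl

theorem op_one : op (1 : Matrix κ κ (H →L[ℂ] H)) = 1 := by
  ext u k
  rw [op_apply, Finset.sum_eq_single k]
  · simp
  · intro b _ hb; simp [Matrix.one_apply, hb.symm]
  · simp

theorem op_neg (A : Matrix κ κ (H →L[ℂ] H)) : op (-A) = - op A := by
  ext u k
  rw [op_apply]; simp [op_apply]

theorem op_adjoint (A : Matrix κ κ (H →L[ℂ] H)) : (op A).adjoint = op Aᴴ := by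
  symm
  rw [ContinuousLinearMap.eq_adjoint_iff]
  intro u v
  simp only [PiLp.inner_apply, op_apply, sum_inner, inner_sum, Matrix.conjTranspose_apply,
    ContinuousLinearMap.star_eq_adjoint, ContinuousLinearMap.adjoint_inner_left]
  rw [Finset.sum_comm]
end Op
end HR

open Matrix

namespace HR
section Coords
open scoped ComplexConjugate
variable {m : ℕ}

theorem bas_apply (α β : Fin m → ℕ) : (bas α : ell m) β = if β = α then 1 else 0 := by
  rw [bas, lp.single_apply]
  by_cases h : β = α
  · subst h; simp
  · simp [h]

theorem bas_inner (α : Fin m → ℕ) (x : ell m) : inner ℂ (bas α) x = x α := by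
  rw [bas, lp.inner_single_left]; simp

theorem exists_sub {j : Fin m} {β : Fin m → ℕ} (h : β j ≠ 0) : ∃ α : Fin m → ℕ, β = α + Pi.single j 1 := by
  refine ⟨β - Pi.single j 1, ?_⟩
  ext i
  by_cases hi : i = j
  · subst hi; simp; omega
  · simp [hi]

variable (Z : Fin m → ell m →L[ℂ] ell m)
  (hZ : ∀ j α, Z j (bas α) = (cc j α : ℂ) • bas (α + Pi.single j 1))
include hZ

theorem D_apply (j : Fin m) (x : ell m) (α : Fin m → ℕ) :
    (Z j).adjoint x α = cc j α * x (α + Pi.single j 1) := by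
  rw [← bas_inner, ContinuousLinearMap.adjoint_inner_right, hZ, inner_smul_left, bas_inner]
  simp

theorem Z_apply (j : Fin m) (x : ell m) (α : Fin m → ℕ) :
    Z j x (α + Pi.single j 1) = cc j α * x α := by
  have : (Z j).adjoint (bas (α + Pi.single j 1)) = (cc j α : ℂ) • bas α := by
    ext γ
    rw [D_apply Z hZ, bas_apply]
    simp only [lp.coeFn_smul, Pi.smul_apply, bas_apply, add_left_inj, smul_eq_mul]
    split_ifs with h
    · rw [h]
    · simp
  rw [← bas_inner, ← ContinuousLinearMap.adjoint_inner_left, this, inner_smul_left, bas_inner]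
  simp

theorem Z_apply_zero (j : Fin m) (x : ell m) (β : Fin m → ℕ) (hβ : β j = 0) :
    Z j x β = 0 := by
  have : (Z j).adjoint (bas β) = 0 := by
    ext γ
    rw [D_apply Z hZ, bas_apply, if_neg]
    · simp
    · intro h; rw [← h] at hβ; simp at hβ
  rw [← bas_inner, ← ContinuousLinearMap.adjoint_inner_left, this, inner_zero_left]

theorem norm_diff (j : Fin m) (ε : ℝ) (hε : 0 < ε) : ∃ s : Finset (Fin m → ℕ), ∀ x : ell m,
    ‖Z j x‖ ^ 2 - ‖(Z j).adjoint x‖ ^ 2 ≤ ε * ‖x‖ ^ 2 + ∑ α ∈ s, ‖x α‖ ^ 2 := by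
  obtain ⟨K, hK⟩ := exists_nat_gt (1 / ε)
  have hfin : {α : Fin m → ℕ | ∑ i, α i < K}.Finite := by
    refine (Set.finite_Iic (fun _ : Fin m => K)).subset ?_
    intro α hα i
    have h1 : α i ≤ ∑ i, α i := Finset.single_le_sum (fun _ _ => Nat.zero_le _) (Finset.mem_univ i)
    exact h1.trans (le_of_lt hα)
  refine ⟨hfin.toFinset, fun x => ?_⟩
  let q : (Fin m → ℕ) → ℝ := fun β => β j / ((∑ i, β i : ℕ) - 1 + m)
  have hm : 0 < m := Fin.pos j
  have h1 : HasSum (fun α => (cc j α) ^ 2 * ‖x α‖ ^ 2) (‖Z j x‖ ^ 2) := by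
    have := lp.hasSum_inner (𝕜 := ℂ) x ((Z j).adjoint (Z j x))
    rw [ContinuousLinearMap.adjoint_inner_right, inner_self_eq_norm_sq_to_K] at this
    have h2 := Complex.hasSum_re this
    convert h2 using 1
    · ext α
      rw [D_apply Z hZ, Z_apply Z hZ]
      have : (inner ℂ (x α) (cc j α * (cc j α * x α)) : ℂ) = ((cc j α ^ 2 * ‖x α‖ ^ 2 : ℝ) : ℂ) := by
        simp only [RCLike.inner_apply]
        have := Complex.mul_conj' (x α)
        push_cast
        rw [← this]; ring
      rw [this, Complex.ofReal_re]
    · norm_cast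
  have h2 : HasSum (fun α => q α * ‖x α‖ ^ 2) (‖(Z j).adjoint x‖ ^ 2) := by
    have := lp.hasSum_inner (𝕜 := ℂ) x (Z j ((Z j).adjoint x))
    rw [← ContinuousLinearMap.adjoint_inner_left, inner_self_eq_norm_sq_to_K] at this
    have h2 := Complex.hasSum_re this
    convert h2 using 1
    · ext β
      have : (inner ℂ (x β) (Z j ((Z j).adjoint x) β) : ℂ) = ((q β * ‖x β‖ ^ 2 : ℝ) : ℂ) := by
        by_cases hβ : β j = 0
        · rw [Z_apply_zero Z hZ _ _ _ hβ]; simp [q, hβ]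
        · obtain ⟨α, rfl⟩ := exists_sub hβ
          rw [Z_apply Z hZ, D_apply Z hZ]
          have hq : q (α + Pi.single j 1) = cc j α ^ 2 := by
            simp only [q, cc]
            rw [Real.sq_sqrt (by positivity)]
            simp [Finset.sum_add_distrib]
          rw [hq]
          simp only [RCLike.inner_apply]
          have := Complex.mul_conj' (x (α + Pi.single j 1))
          push_cast
          rw [← this]; ring
      rw [this, Complex.ofReal_re]
    · norm_cast
  have h3 : HasSum (fun α => ‖x α‖ ^ 2) (‖x‖ ^ 2) := by
    have := lp.hasSum_inner (𝕜 := ℂ) x x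
    rw [inner_self_eq_norm_sq_to_K] at this
    have h2 := Complex.hasSum_re this
    convert h2 using 1
    · ext α
      rw [inner_self_eq_norm_sq_to_K]; norm_cast
    · norm_cast
  have h4 : HasSum (fun α => if α ∈ hfin.toFinset then ‖x α‖ ^ 2 else 0) (∑ α ∈ hfin.toFinset, ‖x α‖ ^ 2) := by
    have := hasSum_sum_of_ne_finset_zero (L := SummationFilter.unconditional _) (f := fun α => if α ∈ hfin.toFinset then ‖x α‖ ^ 2 else 0)
      (s := hfin.toFinset) (fun b hb => by simp only [if_neg hb])
    convert this using 1
    exact Finset.sum_congr rfl fun α hα => by simp only [if_pos hα]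
  refine hasSum_le (fun α => ?_) (h1.sub h2) ((h3.mul_left ε).add h4)
  have h5 : cc j α ^ 2 - q α ≤ 1 / ((∑ i, α i : ℕ) + m) := by
    simp only [cc, q]
    rw [Real.sq_sqrt (by positivity)]
    have hn : (0:ℝ) < (∑ i, α i : ℕ) + m := by positivity
    by_cases hα : α j = 0
    · simp [hα]
    · have h6 : 0 < ∑ i, α i := lt_of_lt_of_le (Nat.pos_of_ne_zero hα)
        (Finset.single_le_sum (fun _ _ => Nat.zero_le _) (Finset.mem_univ j))
      have h7 : (1:ℝ) ≤ (∑ i, α i : ℕ) := by exact_mod_cast h6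
      have h8 : (1:ℝ) ≤ m := by exact_mod_cast hm
      have h9 : (α j : ℝ) / ((∑ i, α i : ℕ) + m) ≤ α j / ((∑ i, α i : ℕ) - 1 + m) := by
        apply div_le_div_of_nonneg_left (by positivity) (by linarith) (by linarith)
      rw [add_div]; linarith
  have h10 : cc j α ^ 2 - q α ≤ ε + if α ∈ hfin.toFinset then 1 else 0 := by
    refine h5.trans ?_
    have h8 : (1:ℝ) ≤ m := by exact_mod_cast hm
    split_ifs with h
    · have : 1 / (((∑ i, α i : ℕ) : ℝ) + m) ≤ 1 := by
        rw [div_le_one (by positivity)]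
        have : (0:ℝ) ≤ (∑ i, α i : ℕ) := by positivity
        linarith
      linarith
    · rw [Set.Finite.mem_toFinset, Set.mem_ofPred_eq, not_lt] at h
      have h' : (K : ℝ) ≤ (∑ i, α i : ℕ) := by exact_mod_cast h
      rw [add_zero, div_le_iff₀ (by positivity)]
      rw [div_lt_iff₀ hε] at hK
      have := mul_le_mul_of_nonneg_left h' hε.le
      have h11 : 0 ≤ ε * m := by positivity
      linarith
  have h12 : (0:ℝ) ≤ ‖x α‖ ^ 2 := by positivity
  have h13 := mul_le_mul_of_nonneg_right h10 h12
  split_ifs at h13 ⊢ <;> linarith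
end Coords
end HR

open Matrix

namespace HR
section FrW
open MeasureTheory
set_option linter.unusedSectionVars false
set_option linter.unusedSimpArgs false
open scoped ComplexConjugate ENNReal

section
variable {S : Type*} [TopologicalSpace S] [CompactSpace S] [MeasurableSpace S]
    [BorelSpace S] (ν : Measure S) [IsFiniteMeasure ν]

/-- multiplication as a ring hom -/
noncomputable def mulR : C(S, ℂ) →+* (Lp ℂ 2 ν →L[ℂ] Lp ℂ 2 ν) where
  toFun := mulL ν
  map_one' := by
    ext1 f
    apply Lp.ext
    filter_upwards [mulL_ae ν 1 f] with x hx
    rw [hx]; simp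
  map_mul' g h := by
    ext1 f
    apply Lp.ext
    have : (mulL ν g * mulL ν h) f = mulL ν g (mulL ν h f) := rfl
    rw [this]
    filter_upwards [mulL_ae ν (g * h) f, mulL_ae ν g (mulL ν h f), mulL_ae ν h f] with x h1 h2 h3
    rw [h1, h2, h3]; simp [mul_assoc]
  map_zero' := by
    ext1 f
    apply Lp.ext
    filter_upwards [mulL_ae ν 0 f, Lp.coeFn_zero ℂ 2 ν] with x hx h0
    rw [hx]
    have : (0 : Lp ℂ 2 ν →L[ℂ] Lp ℂ 2 ν) f = 0 := rfl
    rw [this, h0]; simp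
  map_add' g h := by
    ext1 f
    apply Lp.ext
    have : (mulL ν g + mulL ν h) f = mulL ν g f + mulL ν h f := rfl
    rw [this]
    filter_upwards [mulL_ae ν (g + h) f, mulL_ae ν g f, mulL_ae ν h f,
      Lp.coeFn_add (mulL ν g f) (mulL ν h f)] with x h1 h2 h3 h4
    rw [h1, h4, Pi.add_apply, h2, h3]; simp [add_mul]

theorem mulR_smul (c : ℂ) (g : C(S, ℂ)) : mulR ν (c • g) = c • mulR ν g := by
  ext1 f
  apply Lp.ext
  have : (c • mulR ν g) f = c • mulL ν g f := rfl
  rw [this]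
  have : mulR ν (c • g) f = mulL ν (c • g) f := rfl
  rw [this]
  filter_upwards [mulL_ae ν (c • g) f, mulL_ae ν g f, Lp.coeFn_smul c (mulL ν g f)] with x h1 h2 h4
  rw [h1, h4, Pi.smul_apply, h2]; simp [mul_assoc]

theorem mulL_star_norm (g : C(S, ℂ)) (f : Lp ℂ 2 ν) : ‖mulL ν (star g) f‖ ≤ ‖mulL ν g f‖ := by
  apply Lp.norm_le_norm_of_ae_le
  filter_upwards [mulL_ae ν (star g) f, mulL_ae ν g f] with x h1 h2
  rw [h1, h2]; simp
end

variable {m : ℕ} {κ : Type} [Fintype κ] [DecidableEq κ]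

/-- symbol -/
def sym (a b : Fin m → Matrix κ κ ℂ) (γ : Matrix κ κ ℂ) (z : Fin m → ℂ) : Matrix κ κ ℂ :=
  ∑ j, (conj (z j) • a j + z j • b j) + γ

/-- Toeplitz operator matrix -/
noncomputable def W (Z : Fin m → ell m →L[ℂ] ell m) (a b : Fin m → Matrix κ κ ℂ)
    (γ : Matrix κ κ ℂ) : Matrix κ κ (ell m →L[ℂ] ell m) :=
  fun k l => ∑ j, (a j k l • (Z j).adjoint + b j k l • Z j) + γ k l • 1

theorem W_star (Z : Fin m → ell m →L[ℂ] ell m) (a b : Fin m → Matrix κ κ ℂ)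
    (γ : Matrix κ κ ℂ) : (W Z a b γ)ᴴ = W Z (fun j => (b j)ᴴ) (fun j => (a j)ᴴ) γᴴ := by
  ext1 k l
  simp only [W, Matrix.conjTranspose_apply, star_add, star_sum, star_smul, star_one,
    ContinuousLinearMap.star_eq_adjoint, ContinuousLinearMap.adjoint_adjoint]
  congr 1
  exact Finset.sum_congr rfl fun j _ => add_comm _ _

theorem sym_star (a b : Fin m → Matrix κ κ ℂ) (γ : Matrix κ κ ℂ) (z : Fin m → ℂ) :
    (sym a b γ z)ᴴ = sym (fun j => (b j)ᴴ) (fun j => (a j)ᴴ) γᴴ z := by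
  simp only [sym, Matrix.conjTranspose_add, Matrix.conjTranspose_sum, Matrix.conjTranspose_smul]
  congr 1
  refine Finset.sum_congr rfl fun j _ => ?_
  rw [add_comm]; simp

theorem comm_est (ν : Measure (Sph m)) [IsFiniteMeasure ν]
    (V : ell m →ₗᵢ[ℂ] Lp ℂ 2 ν) (Z : Fin m → ell m →L[ℂ] ell m)
    (hV : ∀ j u, mulL ν (coord j) (V u) = V (Z j u)) (j : Fin m) (x : ell m) :
    ‖mulL ν (star (coord j)) (V x) - V ((Z j).adjoint x)‖ ^ 2 ≤
      ‖Z j x‖ ^ 2 - ‖(Z j).adjoint x‖ ^ 2 := by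
  have h1 : inner ℂ (mulL ν (star (coord j)) (V x)) (V ((Z j).adjoint x)) =
      ((‖(Z j).adjoint x‖ ^ 2 : ℝ) : ℂ) := by
    rw [mulL_inner, hV, V.inner_map_map, ← ContinuousLinearMap.adjoint_inner_left,
      inner_self_eq_norm_sq_to_K]
    simp
  have h2 := mulL_star_norm ν (coord j) (V x)
  rw [hV, V.norm_map] at h2
  have h3 := norm_sub_sq (𝕜 := ℂ) (mulL ν (star (coord j)) (V x)) (V ((Z j).adjoint x))
  rw [h1, V.norm_map] at h3
  have h4 : RCLike.re ((‖(Z j).adjoint x‖ ^ 2 : ℝ) : ℂ) = ‖(Z j).adjoint x‖ ^ 2 :=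
    Complex.ofReal_re _
  rw [h4] at h3
  rw [h3]
  have := pow_le_pow_left₀ (norm_nonneg _) h2 2
  linarith

theorem comm_est' (ν : Measure (Sph m)) [IsFiniteMeasure ν]
    (V : ell m →ₗᵢ[ℂ] Lp ℂ 2 ν) (Z : Fin m → ell m →L[ℂ] ell m)
    (hZ : ∀ j α, Z j (bas α) = (cc j α : ℂ) • bas (α + Pi.single j 1))
    (hV : ∀ j u, mulL ν (coord j) (V u) = V (Z j u)) (ε : ℝ) (hε : 0 < ε) :
    ∃ s : Finset (Fin m → ℕ), ∀ j x,
    ‖mulL ν (star (coord j)) (V x) - V ((Z j).adjoint x)‖ ≤ ε * ‖x‖ + ∑ α ∈ s, ‖x α‖ := by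
  choose s hs using fun j => norm_diff Z hZ j (ε ^ 2) (by positivity)
  refine ⟨Finset.univ.biUnion s, fun j x => ?_⟩
  have h0 : (0:ℝ) ≤ ∑ α ∈ s j, ‖x α‖ := Finset.sum_nonneg fun _ _ => norm_nonneg _
  have h1 : ∑ α ∈ s j, ‖x α‖ ≤ ∑ α ∈ Finset.univ.biUnion s, ‖x α‖ :=
    Finset.sum_le_sum_of_subset_of_nonneg (Finset.subset_biUnion_of_mem s (Finset.mem_univ j))
      fun _ _ _ => norm_nonneg _
  have h2 : ∑ α ∈ s j, ‖x α‖ ^ 2 ≤ (∑ α ∈ s j, ‖x α‖) ^ 2 :=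
    Finset.sum_sq_le_sq_sum_of_nonneg fun _ _ => norm_nonneg _
  have h3 := (comm_est ν V Z hV j x).trans (hs j x)
  have h4 : ‖mulL ν (star (coord j)) (V x) - V ((Z j).adjoint x)‖ ≤ ε * ‖x‖ + ∑ α ∈ s j, ‖x α‖ := by
    apply le_of_sq_le_sq _ (by positivity)
    have : 0 ≤ ε * ‖x‖ * ∑ α ∈ s j, ‖x α‖ := by positivity
    nlinarith
  linarith

theorem pilp_norm_le {H : Type*} [NormedAddCommGroup H] (f : PiLp 2 (fun _ : κ => H)) :
    ‖f‖ ≤ ∑ k, ‖f k‖ := by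
  apply le_of_sq_le_sq _ (Finset.sum_nonneg fun _ _ => norm_nonneg _)
  rw [PiLp.norm_sq_eq_of_L2]
  exact Finset.sum_sq_le_sq_sum_of_nonneg fun _ _ => norm_nonneg _

/-- matrix of continuous functions -/
noncomputable def Gm (a b : Fin m → Matrix κ κ ℂ) (γ : Matrix κ κ ℂ) : Matrix κ κ C(Sph m, ℂ) :=
  fun k l => ∑ j, (a j k l • star (coord j) + b j k l • coord j) + γ k l • 1

theorem Gm_inv (a b : Fin m → Matrix κ κ ℂ) (γ : Matrix κ κ ℂ)
    (h : ∀ z : Sph m, IsUnit (sym a b γ (z : EuclideanSpace ℂ (Fin m)))) :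
    ∃ G', G' * Gm a b γ = 1 := by
  have hd : IsUnit (Gm a b γ).det := by
    rw [ContinuousMap.isUnit_iff_forall_ne_zero]
    intro z
    let ev : C(Sph m, ℂ) →+* ℂ := 
      { toFun := fun f => f z, map_one' := rfl, map_mul' := fun _ _ => rfl,
        map_zero' := rfl, map_add' := fun _ _ => rfl }
    have h1 : ev (Gm a b γ).det = (ev.mapMatrix (Gm a b γ)).det := RingHom.map_det _ _
    have h2 : ev.mapMatrix (Gm a b γ) = sym a b γ (z : EuclideanSpace ℂ (Fin m)) := by
      ext k l
      simp only [RingHom.mapMatrix_apply, Matrix.map_apply, Gm, sym, map_add, map_sum, ev,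
        Matrix.add_apply, Matrix.sum_apply, Matrix.smul_apply]
      show _ = _
      congr 1
      · refine Finset.sum_congr rfl fun j _ => ?_
        show a j k l * conj _ + b j k l * _ = _
        simp only [smul_eq_mul]
        rw [mul_comm, mul_comm (b j k l)]; rfl
      · show γ k l * 1 = _
        ring
    show ev _ ≠ 0
    rw [h1, h2]
    exact ((Matrix.isUnit_iff_isUnit_det _).1 (h z)).ne_zero
  exact ⟨(Gm a b γ)⁻¹, Matrix.nonsing_inv_mul _ hd⟩

set_option maxHeartbeats 1000000 in
theorem half_W (ν : Measure (Sph m)) [IsFiniteMeasure ν]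
    (V : ell m →ₗᵢ[ℂ] Lp ℂ 2 ν) (Z : Fin m → ell m →L[ℂ] ell m)
    (hZ : ∀ j α, Z j (bas α) = (cc j α : ℂ) • bas (α + Pi.single j 1))
    (hV : ∀ j u, mulL ν (coord j) (V u) = V (Z j u))
    (a b : Fin m → Matrix κ κ ℂ) (γ : Matrix κ κ ℂ)
    (h : ∀ z : Sph m, IsUnit (sym a b γ (z : EuclideanSpace ℂ (Fin m)))) :
    FiniteDimensional ℂ (op (W Z a b γ)).ker ∧
      IsClosed ((op (W Z a b γ)).range : Set (PiLp 2 (fun _ : κ => ell m))) := by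
  obtain ⟨G', hG'⟩ := Gm_inv a b γ h
  have hM : op (G'.map (mulR ν)) * op ((Gm a b γ).map (mulR ν)) = 1 := by
    rw [← op_mul, ← Matrix.map_mul, hG', Matrix.map_one _ (map_zero _) (map_one _), op_one]
  set c := ‖op (G'.map (mulR ν))‖ with hc
  have hc0 : 0 ≤ c := norm_nonneg _
  have hf : ∀ f, ‖f‖ ≤ c * ‖op ((Gm a b γ).map (mulR ν)) f‖ := fun f => by
    have h1 : op (G'.map (mulR ν)) (op ((Gm a b γ).map (mulR ν)) f) = f := DFunLike.congr_fun hM f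
    calc ‖f‖ = _ := by rw [h1]
      _ ≤ _ := ContinuousLinearMap.le_opNorm _ _
  set A : ℝ := ∑ k, ∑ l, ∑ j, ‖a j k l‖ with hA
  have hA0 : 0 ≤ A := Finset.sum_nonneg fun _ _ => Finset.sum_nonneg fun _ _ =>
    Finset.sum_nonneg fun _ _ => norm_nonneg _
  obtain ⟨s, hs⟩ := comm_est' ν V Z hZ hV (1 / (2 * (c * A + 1))) (by positivity)
  let R : PiLp 2 (fun _ : κ => ell m) →L[ℂ] (κ × s → ℂ) :=
    ContinuousLinearMap.pi fun p => (lp.evalCLM ℂ (fun _ : Fin m → ℕ => ℂ) 2 (p.2 : Fin m → ℕ)).comp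
      (PiLp.proj 2 (fun _ : κ => ell m) p.1)
  have hR : ∀ u l, ∑ α ∈ s, ‖u l α‖ ≤ s.card * ‖R u‖ := by
    intro u l
    rw [← nsmul_eq_mul]
    apply Finset.sum_le_card_nsmul
    intro α hα
    exact norm_le_pi_norm (R u) (l, ⟨α, hα⟩)
  refine half_fr _ R (2 * c + 2 * c * A * s.card) fun u => ?_
  set f : PiLp 2 (fun _ : κ => Lp ℂ 2 ν) := WithLp.toLp 2 fun k => V (u k) with hfd
  set g : PiLp 2 (fun _ : κ => Lp ℂ 2 ν) := WithLp.toLp 2 fun k => V (op (W Z a b γ) u k) with hgd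
  have nV : ∀ w : PiLp 2 (fun _ : κ => ell m),
      ‖(WithLp.toLp 2 fun k => V (w k) : PiLp 2 (fun _ : κ => Lp ℂ 2 ν))‖ = ‖w‖ := by
    intro w
    rw [← sq_eq_sq₀ (norm_nonneg _) (norm_nonneg _), PiLp.norm_sq_eq_of_L2, PiLp.norm_sq_eq_of_L2]
    simp
  have nf : ‖f‖ = ‖u‖ := nV u
  have ng : ‖g‖ = ‖op (W Z a b γ) u‖ := nV _
  have hd : ∀ k, (op ((Gm a b γ).map (mulR ν)) f - g) k =
      ∑ l, ∑ j, a j k l • (mulL ν (star (coord j)) (V (u l)) - V ((Z j).adjoint (u l))) := by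
    intro k
    rw [PiLp.sub_apply, op_apply]
    simp only [hgd, hfd, op_apply, map_sum, ← Finset.sum_sub_distrib]
    refine Finset.sum_congr rfl fun l _ => ?_
    simp only [Gm, W, Matrix.map_apply, map_add, map_sum, mulR_smul, map_one,
      ContinuousLinearMap.add_apply, _root_.sum_apply, ContinuousLinearMap.smul_apply,
      ContinuousLinearMap.one_apply, map_smul]
    rw [add_sub_add_right_eq_sub, ← Finset.sum_sub_distrib]
    refine Finset.sum_congr rfl fun j _ => ?_
    have e1 : mulR ν (coord j) (V (u l)) = V (Z j (u l)) := hV j (u l)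
    have e2 : mulR ν (star (coord j)) (V (u l)) = mulL ν (star (coord j)) (V (u l)) := rfl
    rw [e1, e2, smul_sub, add_sub_add_right_eq_sub]
  set ε := 1 / (2 * (c * A + 1)) with hε
  have hu : ∀ l, ‖u l‖ ≤ ‖u‖ := fun l => PiLp.norm_apply_le u l
  have hd2 : ‖op ((Gm a b γ).map (mulR ν)) f - g‖ ≤ A * (ε * ‖u‖ + s.card * ‖R u‖) := by
    refine (pilp_norm_le _).trans ?_
    simp only [hA, Finset.sum_mul]
    refine Finset.sum_le_sum fun k _ => ?_
    rw [hd]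
    refine norm_sum_le_of_le _ fun l _ => norm_sum_le_of_le _ fun j _ => ?_
    rw [norm_smul]
    refine mul_le_mul_of_nonneg_left ?_ (norm_nonneg _)
    refine (hs j (u l)).trans (add_le_add ?_ (hR u l))
    exact mul_le_mul_of_nonneg_left (hu l) (by positivity)
  have h1 : ‖u‖ ≤ c * (‖op (W Z a b γ) u‖ + A * (ε * ‖u‖ + s.card * ‖R u‖)) := by
    rw [← nf]
    refine (hf f).trans (mul_le_mul_of_nonneg_left ?_ hc0)
    rw [nf, ← ng]
    have : op ((Gm a b γ).map (mulR ν)) f = g + (op ((Gm a b γ).map (mulR ν)) f - g) := by abel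
    rw [this]
    exact (norm_add_le _ _).trans (by linarith)
  have h2 : c * A * ε ≤ 1 / 2 := by
    rw [hε, mul_one_div, div_le_div_iff₀ (by positivity) (by norm_num)]
    nlinarith [mul_nonneg hc0 hA0]
  have h3 : c * A * ε * ‖u‖ ≤ 1 / 2 * ‖u‖ := mul_le_mul_of_nonneg_right h2 (norm_nonneg _)
  have h4 : 0 ≤ c * ‖R u‖ := by positivity
  have h5 : 0 ≤ c * A * s.card * ‖op (W Z a b γ) u‖ := by positivity
  nlinarith

/-- all analysis packed -/
theorem exists_Z (m : ℕ) (hm : 0 < m) : ∃ Z : Fin m → ell m →L[ℂ] ell m,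
    (∀ j α, Z j (bas α) = (cc j α : ℂ) • bas (α + Pi.single j 1)) ∧
    ∀ (κ : Type) [Fintype κ] [DecidableEq κ] (a b : Fin m → Matrix κ κ ℂ) (γ : Matrix κ κ ℂ),
      (∀ z : Fin m → ℂ, (∑ j, ‖z j‖ ^ 2 = 1) → IsUnit (sym a b γ z)) → Fr (op (W Z a b γ)) := by
  obtain ⟨ν, hν, V, Z, hZ, hV⟩ := exists_hardy m hm
  refine ⟨Z, hZ, ?_⟩
  intro κ _ _ a b γ h
  have hz : ∀ z : Sph m, ∑ j, ‖(z : EuclideanSpace ℂ (Fin m)) j‖ ^ 2 = 1 := fun z => by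
    rw [← EuclideanSpace.norm_sq_eq, norm_eq_of_mem_sphere z]; norm_num
  have h1 := half_W ν V Z hZ hV a b γ fun z => h _ (hz z)
  have h2 := half_W ν V Z hZ hV (fun j => (b j)ᴴ) (fun j => (a j)ᴴ) γᴴ fun z => by
    rw [← sym_star]
    exact (h _ (hz z)).star
  refine ⟨h1.1, ?_, h1.2⟩
  rw [op_adjoint, W_star]
  exact h2.1
end FrW
end HR

open Matrix

namespace HR
section Par
open scoped ComplexConjugate ENNReal
set_option linter.unusedSectionVars false
set_option linter.unusedSimpArgs false
variable {m : ℕ}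

/-- sign -/
def sgn (α : Fin m → ℕ) : ℂ := (-1) ^ (∑ i, α i)

theorem sgn_sq (α : Fin m → ℕ) : sgn α * sgn α = 1 := by
  rw [sgn, ← mul_pow]; simp

theorem sgn_norm (α : Fin m → ℕ) : ‖sgn α‖ = 1 := by simp [sgn]

theorem sgn_conj (α : Fin m → ℕ) : conj (sgn α) = sgn α := by simp [sgn]

theorem sgn_succ (α : Fin m → ℕ) (j : Fin m) : sgn (α + Pi.single j 1) = - sgn α := by
  simp [sgn, Finset.sum_add_distrib, pow_add]

/-- parity operator -/
noncomputable def par (m : ℕ) : ell m →L[ℂ] ell m :=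
  LinearMap.mkContinuous
    { toFun := fun x => ⟨fun α => sgn α * x α, by
        have h := lp.memℓp x
        have h2 : Memℓp (fun α => sgn α * x α) 2 := by
          rw [memℓp_gen_iff (by norm_num)] at h ⊢
          simpa [sgn_norm] using h
        exact h2⟩
      map_add' := fun x y => by ext α; exact mul_add _ _ _
      map_smul' := fun c x => by ext α; exact mul_left_comm _ _ _ } 1 (by
    intro x
    rw [one_mul, lp.norm_eq_tsum_rpow (by norm_num), lp.norm_eq_tsum_rpow (by norm_num)]
    simp [sgn_norm])

theorem par_apply (x : ell m) (α : Fin m → ℕ) : par m x α = sgn α * x α := rfl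

theorem par_par (x : ell m) : par m (par m x) = x := by
  ext α
  rw [par_apply, par_apply, ← mul_assoc, sgn_sq, one_mul]

theorem par_adjoint : (par m).adjoint = par m := by
  symm
  rw [ContinuousLinearMap.eq_adjoint_iff]
  intro x y
  rw [lp.inner_eq_tsum, lp.inner_eq_tsum]
  refine tsum_congr fun α => ?_
  rw [par_apply, par_apply]
  simp [RCLike.inner_apply, sgn_conj]; ring

variable (Z : Fin m → ell m →L[ℂ] ell m)
  (hZ : ∀ j α, Z j (bas α) = (cc j α : ℂ) • bas (α + Pi.single j 1))

theorem D_par (hZ : ∀ j α, Z j (bas α) = (cc j α : ℂ) • bas (α + Pi.single j 1))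
    (j : Fin m) (x : ell m) : (Z j).adjoint (par m x) = - par m ((Z j).adjoint x) := by
  ext α
  rw [D_apply Z hZ, lp.coeFn_neg, Pi.neg_apply, par_apply, par_apply, D_apply Z hZ, sgn_succ]
  ring

theorem Z_par (hZ : ∀ j α, Z j (bas α) = (cc j α : ℂ) • bas (α + Pi.single j 1))
    (j : Fin m) (x : ell m) : Z j (par m x) = - par m (Z j x) := by
  ext β
  rw [lp.coeFn_neg, Pi.neg_apply, par_apply]
  by_cases hβ : β j = 0
  · rw [Z_apply_zero Z hZ _ _ _ hβ, Z_apply_zero Z hZ _ _ _ hβ]; simp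
  · obtain ⟨α, rfl⟩ := exists_sub hβ
    rw [Z_apply Z hZ, Z_apply Z hZ, par_apply, sgn_succ]
    ring

variable {κ : Type} [Fintype κ] [DecidableEq κ]

variable (m κ) in
/-- parity on vectors -/
noncomputable def Par : PiLp 2 (fun _ : κ => ell m) →L[ℂ] PiLp 2 (fun _ : κ => ell m) :=
  op (Matrix.diagonal fun _ => par m)

theorem Par_apply (u : PiLp 2 (fun _ : κ => ell m)) (k : κ) : Par m κ u k = par m (u k) := by
  rw [Par, op_apply, Finset.sum_eq_single k]
  · simp
  · intro l _ hl; simp [Matrix.diagonal_apply, hl.symm]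
  · simp

theorem Par_mul : Par m κ * Par m κ = 1 := by
  ext1 u
  ext1 k
  show Par m κ (Par m κ u) k = u k
  rw [Par_apply, Par_apply, par_par]

theorem Par_adjoint : (Par m κ).adjoint = Par m κ := by
  rw [Par, op_adjoint, Matrix.diagonal_conjTranspose]
  congr 2
  ext1 k
  exact par_adjoint

theorem W_odd (hZ : ∀ j α, Z j (bas α) = (cc j α : ℂ) • bas (α + Pi.single j 1))
    (a b : Fin m → Matrix κ κ ℂ) :
    op (W Z a b 0) * Par m κ = - (Par m κ * op (W Z a b 0)) := by
  ext1 u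
  ext1 k
  show op (W Z a b 0) (Par m κ u) k = - (Par m κ (op (W Z a b 0) u) k)
  rw [Par_apply, op_apply, op_apply, map_sum, ← Finset.sum_neg_distrib]
  refine Finset.sum_congr rfl fun l _ => ?_
  rw [Par_apply]
  simp only [W, Matrix.zero_apply, zero_smul, add_zero, _root_.sum_apply, map_sum,
    ← Finset.sum_neg_distrib, _root_.add_apply, _root_.smul_apply, map_add, map_smul]
  refine Finset.sum_congr rfl fun j _ => ?_
  rw [Z_par Z hZ, D_par Z hZ]; module

/-- graded kernels -/
noncomputable def gk (a b : Fin m → Matrix κ κ ℂ) (σ : ℂ) :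
    Submodule ℂ (PiLp 2 (fun _ : κ => ell m)) :=
  (op (W Z a b 0)).ker ⊓ (Par m κ - σ • 1).ker

theorem mem_gk {a b : Fin m → Matrix κ κ ℂ} {σ : ℂ} {u : PiLp 2 (fun _ : κ => ell m)} :
    u ∈ gk Z a b σ ↔ (∀ k, ∑ l, W Z a b 0 k l (u l) = 0) ∧ ∀ k, par m (u k) = σ • u k := by
  have h1 : u ∈ (op (W Z a b 0)).ker ↔ ∀ k, ∑ l, W Z a b 0 k l (u l) = 0 := by
    rw [LinearMap.mem_ker]
    constructor
    · intro h k
      rw [← op_apply]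
      exact congrArg (fun f => f.ofLp k) h
    · intro h
      ext1 k
      exact (op_apply _ _ _).trans (h k)
  have h2 : u ∈ (Par m κ - σ • 1).ker ↔ ∀ k, par m (u k) = σ • u k := by
    rw [LinearMap.mem_ker]
    have : (Par m κ - σ • 1) u = Par m κ u - σ • u := rfl
    have h3 : (Par m κ u - σ • u = 0) ↔ ∀ k, par m (u k) = σ • u k := by
      rw [sub_eq_zero]
      constructor
      · intro h k
        rw [← Par_apply, h]; rfl
      · intro h
        ext1 k
        rw [Par_apply, h]; rfl
    exact h3
  rw [gk, Submodule.mem_inf, h1, h2]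

/-- graded index of symbols -/
noncomputable def gi (a b : Fin m → Matrix κ κ ℂ) : ℤ :=
  (Module.finrank ℂ (gk Z a b 1) : ℤ) -
    Module.finrank ℂ (gk Z (fun j => (b j)ᴴ) (fun j => (a j)ᴴ) (-1))

theorem gi_eq (a b : Fin m → Matrix κ κ ℂ) : gi Z a b = gind (Par m κ) (op (W Z a b 0)) := by
  have e : Par m κ - (-1 : ℂ) • 1 = Par m κ + 1 := by module
  rw [gi, gind, op_adjoint, W_star, gk, gk, one_smul, e, Matrix.conjTranspose_zero]

theorem op_scalar_unit (C : Matrix κ κ ℂ) (hC : IsUnit C) :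
    ∃ G : PiLp 2 (fun _ : κ => ell m) →L[ℂ] PiLp 2 (fun _ : κ => ell m),
      G * op (W Z (fun _ => (0 : Matrix κ κ ℂ)) (fun _ => 0) C) = 1 := by
  obtain ⟨C', hC'⟩ := hC.exists_left_inv
  have key : ∀ C : Matrix κ κ ℂ, W Z (fun _ => (0 : Matrix κ κ ℂ)) (fun _ => 0) C =
      (algebraMap ℂ (ell m →L[ℂ] ell m)).mapMatrix C := by
    intro C
    ext1 k l
    simp [W, Algebra.algebraMap_eq_smul_one]
  refine ⟨op (W Z (fun _ => (0 : Matrix κ κ ℂ)) (fun _ => 0) C'), ?_⟩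
  rw [← op_mul, key, key, ← map_mul, hC', map_one, op_one]

theorem gi_symm (hZ : ∀ j α, Z j (bas α) = (cc j α : ℂ) • bas (α + Pi.single j 1))
    (hFr : ∀ (a b : Fin m → Matrix κ κ ℂ) (γ : Matrix κ κ ℂ),
      (∀ z : Fin m → ℂ, (∑ j, ‖z j‖ ^ 2 = 1) → IsUnit (sym a b γ z)) → Fr (op (W Z a b γ)))
    (a b : Fin m → Matrix κ κ ℂ) (C : Matrix κ κ ℂ)
    (h : ∀ (z : Fin m → ℂ) (t : ℝ), (∑ j, ‖z j‖ ^ 2 + t ^ 2 = 1) → IsUnit (sym a b ((t:ℂ) • C) z)) :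
    gi Z a b = gi Z (fun j => (b j)ᴴ) (fun j => (a j)ᴴ) := by
  let T : ℝ → _ := fun θ => op (W Z (fun j => (Real.cos θ : ℂ) • a j) (fun j => (Real.cos θ : ℂ) • b j)
    ((Real.sin θ : ℂ) • C))
  have hT : ∀ θ, Fr (T θ) := by
    intro θ
    apply hFr
    intro z hz
    have := h (fun j => (Real.cos θ : ℂ) * z j) (Real.sin θ) (by
      simp only [norm_mul, mul_pow, ← Finset.mul_sum, hz]
      rw [Complex.norm_real, Real.norm_eq_abs, sq_abs, mul_one]
      exact Real.cos_sq_add_sin_sq θ)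
    convert this using 1
    simp only [sym, map_mul, Complex.conj_ofReal]
    congr 1
    refine Finset.sum_congr rfl fun j _ => ?_
    module
  have hcont : Continuous T := by
    apply op_continuous
    intro k l
    simp only [W, Matrix.smul_apply]
    fun_prop
  have h0 : T 0 = op (W Z a b 0) := by simp [T]
  have h1 : T (Real.pi / 2) = op (W Z (fun _ => (0 : Matrix κ κ ℂ)) (fun _ => 0) C) := by
    simp [T]
  have hC : IsUnit C := by
    have := h 0 1 (by simp)
    simpa [sym] using this
  have kz : ∀ C : Matrix κ κ ℂ, IsUnit C → 
      Module.finrank ℂ (op (W Z (fun _ => (0 : Matrix κ κ ℂ)) (fun _ => 0) C)).ker = 0 := by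
    intro C hC
    obtain ⟨G, hG⟩ := op_scalar_unit Z C hC
    have : (op (W Z (fun _ => (0 : Matrix κ κ ℂ)) (fun _ => 0) C)).ker = ⊥ := by
      rw [LinearMap.ker_eq_bot']
      intro u hu
      have h2 : G (op (W Z (fun _ => (0 : Matrix κ κ ℂ)) (fun _ => 0) C) u) = u := DFunLike.congr_fun hG u
      rw [← h2]
      exact (congrArg G hu).trans (map_zero G)
    rw [this, finrank_bot]
  have hi : ind (T 0) = 0 := by
    rw [ind_path T hcont hT 0 (Real.pi / 2), h1, ind, op_adjoint, W_star, kz _ hC]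
    have h3 := kz Cᴴ hC.star
    have e : (fun _ : Fin m => (0 : Matrix κ κ ℂ)ᴴ) = fun _ => 0 := by simp
    rw [e, h3]; simp
  rw [ind_split (Par m κ) (T 0) Par_adjoint Par_mul (by rw [h0]; exact W_odd Z hZ a b) (hT 0), h0,
    op_adjoint, W_star, Matrix.conjTranspose_zero, ← gi_eq, ← gi_eq] at hi
  omega
end Par
end HR

open Matrix

namespace HR
section Car
open scoped ComplexConjugate ENNReal
set_option linter.unusedSectionVars false
set_option linter.unusedSimpArgs false

/-- canonical anticommutation relations with one-dimensional vacuum -/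
structure Car {m : ℕ} {Λ : Type} [Fintype Λ] [DecidableEq Λ] (e : Fin m → Matrix Λ Λ ℂ)
    (v : Λ → ℂ) : Prop where
  anti : ∀ i j, e i * e j = - (e j * e i)
  diag : ∀ i, e i * (e i)ᴴ + (e i)ᴴ * e i = 1
  off : ∀ i j, i ≠ j → e i * (e j)ᴴ = - ((e j)ᴴ * e i)
  v0 : v ≠ 0
  vac : ∀ j, (e j)ᴴ *ᵥ v = 0
  uniq : ∀ w, (∀ j, (e j)ᴴ *ᵥ w = 0) → ∃ c : ℂ, w = c • v

theorem exists_car (m : ℕ) : ∃ (Λ : Type) (_ : Fintype Λ) (_ : DecidableEq Λ)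
    (e : Fin m → Matrix Λ Λ ℂ) (v : Λ → ℂ), Fintype.card Λ = 2 ^ m ∧ Car e v := by
  induction m with
  | zero =>
    refine ⟨Unit, inferInstance, inferInstance, Fin.elim0, fun _ => 1, by simp,
      fun i => i.elim0, fun i => i.elim0, fun i => i.elim0, ?_, fun i => i.elim0, ?_⟩
    · intro h; simpa using congrFun h ()
    · intro w _; exact ⟨w (), by ext; simp⟩
  | succ m ih =>
    obtain ⟨Λ, _, _, e, v, hc, h⟩ := ih
    refine ⟨Λ ⊕ Λ, inferInstance, inferInstance,
      Fin.cons (fromBlocks 0 0 1 0) (fun j => fromBlocks (e j) 0 0 (-(e j))),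
      Sum.elim v 0, ?_, ?_, ?_, ?_, ?_, ?_, ?_⟩
    · rw [Fintype.card_sum, hc]; ring
    · intro i j
      refine Fin.cases ?_ (fun i => ?_) i <;> refine Fin.cases ?_ (fun j => ?_) j <;>
        simp [fromBlocks_multiply, fromBlocks_neg]
      exact h.anti i j
    · intro i
      refine Fin.cases ?_ (fun i => ?_) i <;>
        simp [fromBlocks_multiply, fromBlocks_conjTranspose, fromBlocks_add, h.diag]
    · intro i j
      refine Fin.cases ?_ (fun i => ?_) i <;> refine Fin.cases ?_ (fun j => ?_) j <;>
        simp [fromBlocks_multiply, fromBlocks_conjTranspose, fromBlocks_neg]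
      exact h.off i j
    · intro h0
      apply h.v0
      ext i
      exact congrFun h0 (Sum.inl i)
    · intro j
      refine Fin.cases ?_ (fun j => ?_) j
      · simp [fromBlocks_conjTranspose, fromBlocks_mulVec]
      · simp [fromBlocks_conjTranspose, fromBlocks_mulVec, h.vac]
    · intro w hw
      have h1 := hw 0
      simp [fromBlocks_conjTranspose, fromBlocks_mulVec] at h1
      have h1' : ∀ i, w (Sum.inr i) = 0 := fun i => congrFun h1 (Sum.inl i)
      obtain ⟨c, hc⟩ := h.uniq (w ∘ Sum.inl) (fun j => by
        have := hw j.succ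
        simp [fromBlocks_conjTranspose, fromBlocks_mulVec] at this
        ext i
        exact congrFun this (Sum.inl i))
      refine ⟨c, ?_⟩
      ext i
      cases i with
      | inl i => exact congrFun hc i
      | inr i => simp [h1']

variable {m : ℕ} {Λ : Type} [Fintype Λ] [DecidableEq Λ] {e : Fin m → Matrix Λ Λ ℂ} {v : Λ → ℂ}

theorem Car.symSq (h : Car e v) (z : Fin m → ℂ) :
    sym e (fun j => (e j)ᴴ) 0 z * sym e (fun j => (e j)ᴴ) 0 z = (∑ j, ‖z j‖ ^ 2 : ℝ) • (1 : Matrix Λ Λ ℂ) := by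
  have e1 : ∀ i j, (conj (z i) • e i + z i • (e i)ᴴ) * (conj (z j) • e j + z j • (e j)ᴴ) +
      (conj (z j) • e j + z j • (e j)ᴴ) * (conj (z i) • e i + z i • (e i)ᴴ) =
      if i = j then (2 * (‖z i‖ ^ 2 : ℝ) : ℂ) • (1 : Matrix Λ Λ ℂ) else 0 := by
    intro i j
    have h1 := h.anti i j
    have h2 : (e i)ᴴ * (e j)ᴴ = - ((e j)ᴴ * (e i)ᴴ) := by
      rw [← conjTranspose_mul, ← conjTranspose_mul, ← conjTranspose_neg, h.anti j i]
    split_ifs with hij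
    · subst hij
      have h3 := h.diag i
      have h1' : e i * e i = 0 := by
        have : (2:ℂ) • (e i * e i) = 0 := by rw [two_smul]; nth_rewrite 1 [h1]; simp
        simpa using this
      have h2' : (e i)ᴴ * (e i)ᴴ = 0 := by
        rw [← conjTranspose_mul, h1', conjTranspose_zero]
      have h4 : (e i)ᴴ * e i = 1 - e i * (e i)ᴴ := eq_sub_of_add_eq' h3
      have h5 : ((‖z i‖ ^ 2 : ℝ) : ℂ) = z i * conj (z i) := by
        rw [Complex.mul_conj']; push_cast; rfl
      rw [h5]
      simp only [add_mul, mul_add, smul_mul_assoc, mul_smul_comm, h1', h2', h4]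
      module
    · have h3 := h.off i j hij
      have h4 := h.off j i (Ne.symm hij)
      simp only [add_mul, mul_add, smul_mul_assoc, mul_smul_comm, h1, h2, h3, h4]
      module
  set g : Fin m → Matrix Λ Λ ℂ := fun j => conj (z j) • e j + z j • (e j)ᴴ with hg
  have e2 : sym e (fun j => (e j)ᴴ) 0 z = ∑ j, g j := by simp [sym, hg]
  rw [e2]
  have e3 : (2:ℂ) • ((∑ j, g j) * ∑ j, g j) = (2:ℂ) • ((∑ j, ‖z j‖ ^ 2 : ℝ) • (1 : Matrix Λ Λ ℂ)) := by
    rw [two_smul]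
    nth_rewrite 1 [Finset.sum_mul_sum]
    rw [Finset.sum_mul_sum]
    nth_rewrite 2 [Finset.sum_comm]
    simp only [← Finset.sum_add_distrib, hg, e1]
    simp only [Finset.sum_ite_eq, Finset.mem_univ, if_true, ← Finset.sum_smul, ← Finset.mul_sum, mul_smul]
    rw [← Finset.smul_sum, Finset.sum_smul]
    congr 1
  exact smul_right_injective _ (two_ne_zero) e3

theorem Car.unit (h : Car e v) (z : Fin m → ℂ) (hz : ∑ j, ‖z j‖ ^ 2 = 1) :
    IsUnit (sym e (fun j => (e j)ᴴ) 0 z) := by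
  have := h.symSq z
  rw [hz, one_smul] at this
  exact IsUnit.of_mul_eq_one _ this

/-- the algebra in the kernel computation -/
theorem Car.ker_alg (h : Car e v) (U : (Fin m → ℕ) → Λ → ℂ)
    (h1 : ∀ α : Fin m → ℕ, ∑ j, (Real.sqrt (α j + 1) : ℂ) • (e j *ᵥ U (α + Pi.single j 1)) = 0)
    (h2 : ∀ β : Fin m → ℕ, ∑ j, (Real.sqrt (β j) : ℂ) • ((e j)ᴴ *ᵥ U (β - Pi.single j 1)) = 0) (α : Fin m → ℕ) :
    ((∑ j, α j : ℕ) : ℂ) • U α + ∑ j, (e j) *ᵥ ((e j)ᴴ *ᵥ U α) = 0 := by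
  have k1 : ∑ i, (Real.sqrt (α i + 1) : ℂ) • e i *ᵥ (∑ j, (Real.sqrt ((α + Pi.single i 1 : Fin m → ℕ) j : ℕ) : ℂ) •
      ((e j)ᴴ *ᵥ U (α + Pi.single i 1 - Pi.single j 1))) = 0 := by
    simp only [h2, mulVec_zero, smul_zero, Finset.sum_const_zero]
  have k2 : ∑ j, (Real.sqrt (α j) : ℂ) • (e j)ᴴ *ᵥ (∑ i, (Real.sqrt ((α - Pi.single j 1 : Fin m → ℕ) i + 1) : ℂ) •
      ((e i) *ᵥ U (α - Pi.single j 1 + Pi.single i 1))) = 0 := by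
    simp only [h1, mulVec_zero, smul_zero, Finset.sum_const_zero]
  simp only [mulVec_sum, Finset.smul_sum, mulVec_smul, smul_smul] at k1 k2
  rw [Finset.sum_comm] at k2
  have k3 := congrArg₂ (· + ·) k1 k2
  simp only [← Finset.sum_add_distrib, add_zero] at k3
  have k4 : ∀ i j, ((Real.sqrt (α i + 1) : ℂ) * (Real.sqrt ((α + Pi.single i 1 : Fin m → ℕ) j : ℕ) : ℂ)) •
        e i *ᵥ (e j)ᴴ *ᵥ U (α + Pi.single i 1 - Pi.single j 1) +
      ((Real.sqrt (α j) : ℂ) * (Real.sqrt ((α - Pi.single j 1 : Fin m → ℕ) i + 1) : ℂ)) •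
      (e j)ᴴ *ᵥ (e i) *ᵥ U (α - Pi.single j 1 + Pi.single i 1) =
      if i = j then (α i : ℂ) • U α + e i *ᵥ (e i)ᴴ *ᵥ U α else 0 := by
    intro i j
    split_ifs with hij
    · subst hij
      have a1 : α + Pi.single i 1 - Pi.single i 1 = α := by simp
      have a2 : (Real.sqrt (α i) : ℂ) • (Real.sqrt ((α - Pi.single i 1 : Fin m → ℕ) i + 1) : ℂ) • (e i)ᴴ *ᵥ (e i) *ᵥ U (α - Pi.single i 1 + Pi.single i 1)
          = (α i : ℂ) • (e i)ᴴ *ᵥ (e i) *ᵥ U α := by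
        by_cases h0 : α i = 0
        · simp [h0]
        · obtain ⟨β, rfl⟩ := exists_sub h0
          rw [smul_smul]
          simp only [add_tsub_cancel_right, Pi.add_apply, Pi.single_eq_same]
          push_cast
          rw [← Complex.ofReal_mul, Real.mul_self_sqrt (by positivity)]
          push_cast; rfl
      have a3 : (Real.sqrt (α i + 1) : ℂ) * (Real.sqrt ((α + Pi.single i 1 : Fin m → ℕ) i : ℕ) : ℂ) = α i + 1 := by
        simp only [Pi.add_apply, Pi.single_eq_same]
        push_cast
        rw [← Complex.ofReal_mul, Real.mul_self_sqrt (by positivity)]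
        push_cast; rfl
      rw [a1, a3, ← smul_smul, a2]
      have a4 : e i *ᵥ (e i)ᴴ *ᵥ U α + (e i)ᴴ *ᵥ e i *ᵥ U α = U α := by
        rw [mulVec_mulVec, mulVec_mulVec, ← add_mulVec, h.diag, one_mulVec]
      have a5 : (e i)ᴴ *ᵥ e i *ᵥ U α = U α - e i *ᵥ (e i)ᴴ *ᵥ U α := eq_sub_of_add_eq' a4
      rw [a5]; module
    · have a3 : (α + Pi.single i 1 : Fin m → ℕ) j = α j := by simp [Ne.symm hij]
      have a4 : (α - Pi.single j 1 : Fin m → ℕ) i = α i := by simp [hij]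
      rw [a3, a4]
      by_cases h0 : α j = 0
      · simp [h0]
      · obtain ⟨β, rfl⟩ := exists_sub h0
        have a5 : β + Pi.single j 1 + Pi.single i 1 - Pi.single j 1 = β + Pi.single i 1 := by
          rw [add_right_comm]; simp
        rw [a5]
        simp only [add_tsub_cancel_right]
        rw [mulVec_mulVec, mulVec_mulVec, h.off i j hij, neg_mulVec, mul_comm]
        module
  simp only [k4] at k3
  simp only [Finset.sum_ite_eq, Finset.mem_univ, if_true] at k3
  rw [Finset.sum_add_distrib, ← Finset.sum_smul] at k3
  push_cast
  exact k3

theorem ker_zero (w : Λ → ℂ) (n : ℕ)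
    (hw : (n : ℂ) • w + ∑ j, (e j) *ᵥ ((e j)ᴴ *ᵥ w) = 0) :
    (n ≠ 0 → w = 0) ∧ ∀ j, (e j)ᴴ *ᵥ w = 0 := by
  have h1 := congrArg (fun x => star w ⬝ᵥ x) hw
  simp only [dotProduct_add, dotProduct_smul, dotProduct_sum, dotProduct_zero] at h1
  have h2 : ∀ j, star w ⬝ᵥ e j *ᵥ (e j)ᴴ *ᵥ w = star ((e j)ᴴ *ᵥ w) ⬝ᵥ ((e j)ᴴ *ᵥ w) := by
    intro j
    rw [star_mulVec, conjTranspose_conjTranspose, dotProduct_mulVec]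
  simp only [h2] at h1
  have h3 : ∀ x : Λ → ℂ, star x ⬝ᵥ x = ((∑ i, ‖x i‖ ^ 2 : ℝ) : ℂ) := by
    intro x
    rw [dotProduct, Complex.ofReal_sum]
    refine Finset.sum_congr rfl fun i _ => ?_
    have := Complex.conj_mul' (x i)
    rw [Pi.star_apply]
    push_cast
    exact this
  simp only [h3, smul_eq_mul] at h1
  have h4 : (n : ℝ) * (∑ i, ‖w i‖ ^ 2) + ∑ j, ∑ i, ‖((e j)ᴴ *ᵥ w) i‖ ^ 2 = 0 := by
    exact_mod_cast h1
  have p1 : ∀ x : Λ → ℂ, 0 ≤ ∑ i, ‖x i‖ ^ 2 := fun x => Finset.sum_nonneg fun _ _ => by positivity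
  have p2 : 0 ≤ ∑ j, ∑ i, ‖((e j)ᴴ *ᵥ w) i‖ ^ 2 := Finset.sum_nonneg fun j _ => p1 _
  have p3 : 0 ≤ (n : ℝ) * (∑ i, ‖w i‖ ^ 2) := mul_nonneg (Nat.cast_nonneg _) (p1 _)
  have p4 : ∀ x : Λ → ℂ, ∑ i, ‖x i‖ ^ 2 = 0 → x = 0 := by
    intro x hx
    rw [Finset.sum_eq_zero_iff_of_nonneg fun _ _ => by positivity] at hx
    ext i
    simpa using hx i (Finset.mem_univ i)
  constructor
  · intro hn
    apply p4
    have : (n : ℝ) * (∑ i, ‖w i‖ ^ 2) = 0 := by linarith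
    rcases mul_eq_zero.1 this with h5 | h5
    · exact absurd (by exact_mod_cast h5) hn
    · exact h5
  · intro j
    apply p4
    have : ∑ j, ∑ i, ‖((e j)ᴴ *ᵥ w) i‖ ^ 2 = 0 := by linarith
    rw [Finset.sum_eq_zero_iff_of_nonneg fun _ _ => p1 _] at this
    exact this j (Finset.mem_univ j)
end Car
end HR

open Matrix

namespace HR
section KerC
open scoped ComplexConjugate ENNReal
set_option linter.unusedSectionVars false
set_option linter.unusedSimpArgs false
variable {m : ℕ} (Z : Fin m → ell m →L[ℂ] ell m)
variable {Λ : Type} [Fintype Λ] [DecidableEq Λ] {e : Fin m → Matrix Λ Λ ℂ} {v : Λ → ℂ}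

theorem op_W_apply (a b : Fin m → Matrix Λ Λ ℂ) (u : PiLp 2 (fun _ : Λ => ell m)) (k : Λ) :
    op (W Z a b 0) u k = ∑ l, ∑ j, (a j k l • (Z j).adjoint (u l) + b j k l • Z j (u l)) := by
  rw [op_apply]
  simp [W, _root_.sum_apply]

theorem D_comm (hZ : ∀ j α, Z j (bas α) = (cc j α : ℂ) • bas (α + Pi.single j 1)) (i j : Fin m)
    (x : ell m) : (Z i).adjoint ((Z j).adjoint x) = (Z j).adjoint ((Z i).adjoint x) := by
  by_cases hij : i = j
  · rw [hij]
  ext α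
  simp only [D_apply Z hZ]
  rw [← mul_assoc, ← mul_assoc, add_right_comm]
  congr 1
  rw [← Complex.ofReal_mul, ← Complex.ofReal_mul]
  congr 1
  simp only [cc]
  rw [← Real.sqrt_mul (by positivity), ← Real.sqrt_mul (by positivity)]
  congr 1
  simp [Finset.sum_add_distrib, hij, Ne.symm hij]
  ring

theorem dd (hZ : ∀ j α, Z j (bas α) = (cc j α : ℂ) • bas (α + Pi.single j 1)) (h : Car e v)
    (u : PiLp 2 (fun _ : Λ => ell m)) :
    op (W Z e (fun _ => 0) 0) (op (W Z e (fun _ => 0) 0) u) = 0 := by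
  ext1 k
  show op (W Z e (fun _ => 0) 0) (op (W Z e (fun _ => 0) 0) u) k = 0
  simp only [op_W_apply, Matrix.zero_apply, zero_smul, add_zero, map_sum, map_smul,
    Finset.smul_sum, smul_smul, zero_mul, Finset.sum_const_zero]
  have e1 : ∀ X : ell m, X = - X → X = 0 := by
    intro X hX
    have : (2:ℂ) • X = 0 := by rw [two_smul]; nth_rewrite 1 [hX]; simp
    simpa using this
  apply e1
  have e2 : ∀ i j n, ∑ l, (e i k l * e j l n) • (Z i).adjoint ((Z j).adjoint (u n)) =
      - ∑ l, (e j k l * e i l n) • (Z j).adjoint ((Z i).adjoint (u n)) := by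
    intro i j n
    rw [← Finset.sum_smul, ← Finset.sum_smul, ← neg_smul, D_comm Z hZ i j]
    congr 1
    rw [← Matrix.mul_apply, ← Matrix.mul_apply, h.anti i j]; rfl
  have e3 : ∀ F : Λ → Fin m → Λ → Fin m → ell m, ∑ l, ∑ i, ∑ n, ∑ j, F l i n j =
      ∑ n, ∑ i, ∑ j, ∑ l, F l i n j := by
    intro F
    calc _ = ∑ i, ∑ l, ∑ n, ∑ j, F l i n j := Finset.sum_comm
      _ = ∑ i, ∑ n, ∑ l, ∑ j, F l i n j := Finset.sum_congr rfl fun i _ => Finset.sum_comm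
      _ = ∑ i, ∑ n, ∑ j, ∑ l, F l i n j := Finset.sum_congr rfl fun i _ =>
          Finset.sum_congr rfl fun n _ => Finset.sum_comm
      _ = _ := Finset.sum_comm
  rw [e3]
  nth_rewrite 1 [show (∑ n, ∑ i, ∑ j, ∑ l, (e i k l * e j l n) • (Z i).adjoint ((Z j).adjoint (u n))) =
     ∑ n, ∑ i, ∑ j, - ∑ l, (e j k l * e i l n) • (Z j).adjoint ((Z i).adjoint (u n)) from
     Finset.sum_congr rfl fun n _ => Finset.sum_congr rfl fun i _ => Finset.sum_congr rfl fun j _ => e2 i j n]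
  simp only [Finset.sum_neg_distrib]
  congr 1
  exact Finset.sum_congr rfl fun n _ => Finset.sum_comm

theorem ker_split (hZ : ∀ j α, Z j (bas α) = (cc j α : ℂ) • bas (α + Pi.single j 1)) (h : Car e v)
    (u : PiLp 2 (fun _ : Λ => ell m)) (hu : op (W Z e (fun j => (e j)ᴴ) 0) u = 0) :
    op (W Z e (fun _ => 0) 0) u = 0 ∧ op (W Z (fun _ => 0) (fun j => (e j)ᴴ) 0) u = 0 := by
  have h1 : op (W Z e (fun _ => 0) 0) u + op (W Z (fun _ => 0) (fun j => (e j)ᴴ) 0) u = 0 := by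
    rw [← hu]
    ext1 k
    rw [PiLp.add_apply]
    simp only [op_W_apply, ← Finset.sum_add_distrib]
    simp
  have h2 : (op (W Z e (fun _ => 0) 0)).adjoint = op (W Z (fun _ => 0) (fun j => (e j)ᴴ) 0) := by
    rw [op_adjoint, W_star]; simp
  rw [← h2] at h1 ⊢
  have h3 : op (W Z e (fun _ => 0) 0) u = 0 := by
    rw [← inner_self_eq_zero (𝕜 := ℂ)]
    have h4 : op (W Z e (fun _ => 0) 0) u = - (op (W Z e (fun _ => 0) 0)).adjoint u :=
      eq_neg_of_add_eq_zero_left h1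
    nth_rewrite 2 [h4]
    rw [inner_neg_right, ContinuousLinearMap.adjoint_inner_right, dd Z hZ h, inner_zero_left, neg_zero]
  refine ⟨h3, ?_⟩
  rw [h3, zero_add] at h1
  exact h1

theorem ker_coords (hZ : ∀ j α, Z j (bas α) = (cc j α : ℂ) • bas (α + Pi.single j 1)) (h : Car e v)
    (u : PiLp 2 (fun _ : Λ => ell m)) (hu : op (W Z e (fun j => (e j)ᴴ) 0) u = 0) :
    (∀ α ≠ 0, ∀ l, u l α = 0) ∧ ∃ c : ℂ, ∀ l, u l 0 = c * v l := by
  obtain ⟨h1, h2⟩ := ker_split Z hZ h u hu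
  let U : (Fin m → ℕ) → Λ → ℂ := fun α l => u l α
  have g1 : ∀ α : Fin m → ℕ, ∑ j, (Real.sqrt (α j + 1) : ℂ) • (e j *ᵥ U (α + Pi.single j 1)) = 0 := by
    intro α
    ext k
    have h3 : op (W Z e (fun _ => 0) 0) u k α = 0 := by rw [h1]; rfl
    rw [op_W_apply] at h3
    simp only [Matrix.zero_apply, zero_smul, add_zero, lp.coeFn_sum, Finset.sum_apply,
      lp.coeFn_smul, Pi.smul_apply, D_apply Z hZ, smul_eq_mul] at h3
    rw [Finset.sum_comm] at h3
    simp only [Finset.sum_apply, Pi.smul_apply, mulVec, dotProduct, smul_eq_mul, Finset.mul_sum, U,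
      Pi.zero_apply]
    have h4 : ∀ j, (Real.sqrt (α j + 1) : ℂ) = Real.sqrt ((∑ i, α i : ℕ) + m) * cc j α := by
      intro j
      have : 0 < m := Fin.pos j
      have h5 : (0:ℝ) < (∑ i, α i : ℕ) + m := by positivity
      rw [cc, ← Complex.ofReal_mul, ← Real.sqrt_mul h5.le, mul_div_cancel₀ _ h5.ne']
    have h6 : (Real.sqrt ((∑ i, α i : ℕ) + m) : ℂ) * ∑ y, ∑ x, e y k x * (↑(cc y α) * u x (α + Pi.single y 1)) = 0 := by
      rw [h3, mul_zero]
    rw [← h6]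
    simp only [Finset.mul_sum, h4]
    exact Finset.sum_congr rfl fun j _ => Finset.sum_congr rfl fun l _ => by ring
  have g2 : ∀ β : Fin m → ℕ, ∑ j, (Real.sqrt (β j) : ℂ) • ((e j)ᴴ *ᵥ U (β - Pi.single j 1)) = 0 := by
    intro β
    ext k
    have h3 : op (W Z (fun _ => 0) (fun j => (e j)ᴴ) 0) u k β = 0 := by rw [h2]; rfl
    rw [op_W_apply] at h3
    simp only [Matrix.zero_apply, zero_smul, zero_add, lp.coeFn_sum, Finset.sum_apply,
      lp.coeFn_smul, Pi.smul_apply, smul_eq_mul] at h3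
    rw [Finset.sum_comm] at h3
    simp only [Finset.sum_apply, Pi.smul_apply, mulVec, dotProduct, smul_eq_mul, Finset.mul_sum, U,
      Pi.zero_apply]
    have h4 : ∀ j l, (Real.sqrt (β j) : ℂ) * u l (β - Pi.single j 1) =
        Real.sqrt ((∑ i, β i : ℕ) - 1 + m) * Z j (u l) β := by
      intro j l
      have : 0 < m := Fin.pos j
      by_cases hβ : β j = 0
      · rw [Z_apply_zero Z hZ _ _ _ hβ, hβ]; simp
      · obtain ⟨α, rfl⟩ := exists_sub hβ
        have h5 : (0:ℝ) < (∑ i, α i : ℕ) + m := by positivity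
        have h6 : ((∑ i, (α + Pi.single j 1 : Fin m → ℕ) i : ℕ) : ℝ) - 1 + m = (∑ i, α i : ℕ) + m := by
          simp [Finset.sum_add_distrib]
        rw [h6, Z_apply Z hZ, cc, ← mul_assoc, ← Complex.ofReal_mul, ← Real.sqrt_mul h5.le,
          mul_div_cancel₀ _ h5.ne']
        simp
    have h6 : (Real.sqrt ((∑ i, β i : ℕ) - 1 + m) : ℂ) * ∑ y, ∑ x, (e y)ᴴ k x * Z y (u x) β = 0 := by
      rw [h3, mul_zero]
    rw [← h6]
    simp only [Finset.mul_sum]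
    refine Finset.sum_congr rfl fun j _ => Finset.sum_congr rfl fun l _ => ?_
    rw [mul_left_comm, h4]; ring
  have g3 := h.ker_alg U g1 g2
  constructor
  · intro α hα l
    have := (ker_zero (e := e) (U α) _ (g3 α)).1 (by
      intro h0
      apply hα
      ext i
      exact (Finset.sum_eq_zero_iff.1 h0) i (Finset.mem_univ i))
    exact congrFun this l
  · obtain ⟨c, hc⟩ := h.uniq (U 0) (ker_zero (e := e) (U 0) _ (g3 0)).2
    exact ⟨c, fun l => congrFun hc l⟩

theorem gk_c_one (hZ : ∀ j α, Z j (bas α) = (cc j α : ℂ) • bas (α + Pi.single j 1)) (h : Car e v) :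
    Module.finrank ℂ (gk Z e (fun j => (e j)ᴴ) 1) = 1 := by
  have hm : (WithLp.toLp 2 fun l => v l • bas 0 : PiLp 2 (fun _ : Λ => ell m)) ∈
      gk Z e (fun j => (e j)ᴴ) 1 := by
    rw [mem_gk]
    constructor
    · intro k
      rw [← op_apply, op_W_apply]
      have h1 : ∀ j, (Z j).adjoint (bas 0) = 0 := by
        intro j
        ext α
        rw [D_apply Z hZ, bas_apply, if_neg]
        · simp
        · intro h0; have := congrFun h0 j; simp at this
      simp only [map_smul, h1, smul_zero, zero_add, smul_smul]
      rw [Finset.sum_comm]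
      refine Finset.sum_eq_zero fun j _ => ?_
      rw [← Finset.sum_smul]
      have := congrFun (h.vac j) k
      simp only [mulVec, dotProduct, Pi.zero_apply] at this
      rw [this, zero_smul]
    · intro k
      simp only [map_smul, one_smul]
      congr 1
      ext α
      rw [par_apply, bas_apply]
      split_ifs with h0
      · subst h0; simp [sgn]
      · simp
  rw [finrank_eq_one_iff']
  refine ⟨⟨_, hm⟩, ?_, ?_⟩
  · intro h0
    apply h.v0
    ext l
    have h1 : (WithLp.toLp 2 fun l => v l • bas 0 : PiLp 2 (fun _ : Λ => ell m)) l 0 = 0 := by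
      rw [show (WithLp.toLp 2 fun l => v l • bas 0 : PiLp 2 (fun _ : Λ => ell m)) = 0 from
        congrArg Subtype.val h0]; rfl
    simpa [bas_apply] using h1
  · rintro ⟨u, hu⟩
    obtain ⟨h1, c, hc⟩ := ker_coords Z hZ h u hu.1
    refine ⟨c, ?_⟩
    apply Subtype.ext
    show c • (WithLp.toLp 2 fun l => v l • bas 0 : PiLp 2 (fun _ : Λ => ell m)) = u
    ext l α
    simp only [PiLp.smul_apply, lp.coeFn_smul, Pi.smul_apply, bas_apply, smul_eq_mul]
    split_ifs with h0
    · subst h0; rw [hc]; ring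
    · rw [h1 α h0]; ring

theorem gk_c_neg (hZ : ∀ j α, Z j (bas α) = (cc j α : ℂ) • bas (α + Pi.single j 1)) (h : Car e v) :
    gk Z e (fun j => (e j)ᴴ) (-1) = ⊥ := by
  rw [eq_bot_iff]
  intro u hu
  obtain ⟨h1, c, hc⟩ := ker_coords Z hZ h u hu.1
  rw [Submodule.mem_bot]
  have h2 := (mem_gk Z).1 hu
  ext l α
  show u l α = 0
  by_cases h0 : α = 0
  · have h3 : par m (u l) α = ((-1 : ℂ) • u l) α := by rw [h2.2 l]
    rw [par_apply, h0] at h3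
    simp [sgn] at h3
    rw [h0]
    exact CharZero.eq_neg_self_iff.1 h3
  · exact h1 α h0 l

theorem gi_c (hZ : ∀ j α, Z j (bas α) = (cc j α : ℂ) • bas (α + Pi.single j 1)) (h : Car e v) :
    gi Z e (fun j => (e j)ᴴ) = 1 := by
  rw [gi, gk_c_one Z hZ h]
  have e1 : (fun j => ((e j)ᴴ)ᴴ) = e := by simp
  rw [e1, gk_c_neg Z hZ h, finrank_bot]; simp
end KerC
end HR

open Matrix

namespace HR
section Slice
open scoped ComplexConjugate ENNReal Kronecker
set_option linter.unusedSectionVars false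
set_option linter.unusedSimpArgs false
variable {m : ℕ} (Z : Fin m → ell m →L[ℂ] ell m)
variable {κ : Type} [Fintype κ] [DecidableEq κ]
variable {Λ : Type} [Fintype Λ] [DecidableEq Λ] {e : Fin m → Matrix Λ Λ ℂ} {v : Λ → ℂ}

theorem slice {H : Type*} [NormedAddCommGroup H] [InnerProductSpace ℂ H]
    {J ι : Type} [Fintype J] [Fintype ι] (q : ι × κ ≃ J)
    (K : Submodule ℂ (PiLp 2 (fun _ : J => H))) (L : ι → Submodule ℂ (PiLp 2 (fun _ : κ => H)))
    (hL : ∀ i, FiniteDimensional ℂ (L i))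
    (h : ∀ u, u ∈ K ↔ ∀ i, (WithLp.toLp 2 fun k => u (q (i, k)) : PiLp 2 (fun _ : κ => H)) ∈ L i) :
    Module.finrank ℂ K = ∑ i, Module.finrank ℂ (L i) := by
  have E : K ≃ₗ[ℂ] (Π i, L i) :=
    { toFun := fun u i => ⟨WithLp.toLp 2 fun k => u.1 (q (i, k)), (h u.1).1 u.2 i⟩
      invFun := fun w => ⟨WithLp.toLp 2 fun j => (w (q.symm j).1).1 (q.symm j).2, by
        rw [h]
        intro i
        have e : (WithLp.toLp 2 fun k => (w (q.symm (q (i, k))).1).1 (q.symm (q (i, k))).2 :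
            PiLp 2 (fun _ : κ => H)) = (w i).1 := by
          ext1 k
          show (w (q.symm (q (i, k))).1).1 (q.symm (q (i, k))).2 = (w i).1 k
          rw [Equiv.symm_apply_apply]
        exact e ▸ (w i).2⟩
      left_inv := fun u => by
        apply Subtype.ext
        ext1 j
        simp
      right_inv := fun w => by
        ext1 i
        apply Subtype.ext
        ext1 k
        show (w (q.symm (q (i, k))).1).1 (q.symm (q (i, k))).2 = (w i).1 k
        rw [Equiv.symm_apply_apply]
      map_add' := fun u w => rfl
      map_smul' := fun c w => rfl }
  rw [E.finrank_eq, Module.finrank_pi_fintype]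

theorem fd_gk (a b : Fin m → Matrix κ κ ℂ) (h : Fr (op (W Z a b 0))) (σ : ℂ) :
    FiniteDimensional ℂ (gk Z a b σ) := by
  have := h.k
  exact Submodule.finiteDimensional_of_le inf_le_left

theorem W_kron (a b : Fin m → Matrix κ κ ℂ) (p q : κ × Λ) :
    W Z (fun j => a j ⊗ₖ (1 : Matrix Λ Λ ℂ)) (fun j => b j ⊗ₖ (1 : Matrix Λ Λ ℂ)) 0 p q =
      if p.2 = q.2 then W Z a b 0 p.1 q.1 else 0 := by
  simp only [W, kroneckerMap_apply, Matrix.one_apply]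
  split_ifs <;> simp

theorem W_kron' (s : ℂ) (a b : Fin m → Matrix Λ Λ ℂ) (p q : κ × Λ) :
    W Z (fun j => s • ((1 : Matrix κ κ ℂ) ⊗ₖ a j)) (fun j => s • ((1 : Matrix κ κ ℂ) ⊗ₖ b j)) 0 p q =
      if p.1 = q.1 then s • W Z a b 0 p.2 q.2 else 0 := by
  simp only [W, kroneckerMap_apply, Matrix.one_apply, Matrix.smul_apply]
  split_ifs <;> simp [Finset.smul_sum, smul_smul]

theorem W_blocks {J : Type} (a11 a12 a21 a22 b11 b12 b21 b22 : Fin m → Matrix J J ℂ) :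
    W Z (fun j => fromBlocks (a11 j) (a12 j) (a21 j) (a22 j))
      (fun j => fromBlocks (b11 j) (b12 j) (b21 j) (b22 j)) 0 =
    fromBlocks (W Z a11 b11 0) (W Z a12 b12 0) (W Z a21 b21 0) (W Z a22 b22 0) := by
  ext1 i j
  cases i <;> cases j <;> simp [W]

theorem W_zero {J : Type} : W Z (fun _ => (0 : Matrix J J ℂ)) (fun _ => 0) 0 = 0 := by
  ext1 i j
  simp [W]

theorem fr_diag (a b a' b' : Fin m → Matrix κ κ ℂ) (σ : ℂ)
    (h : FiniteDimensional ℂ (gk Z a b σ)) (h' : FiniteDimensional ℂ (gk Z a' b' σ)) :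
    Module.finrank ℂ (gk Z
      (fun j => fromBlocks (a j ⊗ₖ (1 : Matrix Λ Λ ℂ)) 0 0 (a' j ⊗ₖ (1 : Matrix Λ Λ ℂ)))
      (fun j => fromBlocks (b j ⊗ₖ (1 : Matrix Λ Λ ℂ)) 0 0 (b' j ⊗ₖ (1 : Matrix Λ Λ ℂ))) σ) =
    Fintype.card Λ * (Module.finrank ℂ (gk Z a b σ) + Module.finrank ℂ (gk Z a' b' σ)) := by
  let q : (Λ ⊕ Λ) × κ ≃ (κ × Λ) ⊕ (κ × Λ) :=
    (Equiv.sumProdDistrib Λ Λ κ).trans (Equiv.sumCongr (Equiv.prodComm _ _) (Equiv.prodComm _ _))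
  rw [slice q _ (fun i => Sum.elim (fun _ => gk Z a b σ) (fun _ => gk Z a' b' σ) i)]
  · rw [Fintype.sum_sum_type]
    show ∑ _ : Λ, Module.finrank ℂ (gk Z a b σ) + ∑ _ : Λ, Module.finrank ℂ (gk Z a' b' σ) = _
    rw [Finset.sum_const, Finset.sum_const]
    simp [mul_add]
  · rintro (i | i)
    · exact h
    · exact h'
  · intro u
    rw [mem_gk, W_blocks, W_zero]
    simp only [Sum.forall, Sum.elim_inl, Sum.elim_inr, mem_gk, Prod.forall, Fintype.sum_sum_type,
      fromBlocks_apply₁₁, fromBlocks_apply₁₂, fromBlocks_apply₂₁, fromBlocks_apply₂₂, W_kron,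
      Fintype.sum_prod_type, Matrix.zero_apply, _root_.zero_apply, Finset.sum_const_zero,
      add_zero, zero_add]
    have e1 : ∀ (F : κ → (ell m →L[ℂ] ell m)) (w : κ → Λ → ell m) (x : Λ),
      ∑ l, ∑ y, (if x = y then F l else 0) (w l y) = ∑ l, F l (w l x) := by
      intro F w x
      refine Finset.sum_congr rfl fun l _ => ?_
      rw [Finset.sum_eq_single x]
      · simp
      · intro b _ hb; simp [hb.symm]
      · simp
    simp only [e1 (fun l => W Z a b 0 _ l) (fun l y => u (Sum.inl (l, y))),
      e1 (fun l => W Z a' b' 0 _ l) (fun l y => u (Sum.inr (l, y)))]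
    constructor
    · rintro ⟨⟨h1, h2⟩, h3, h4⟩
      exact ⟨fun x => ⟨fun k => h1 k x, fun k => h3 k x⟩, fun x => ⟨fun k => h2 k x, fun k => h4 k x⟩⟩
    · rintro ⟨h1, h2⟩
      exact ⟨⟨fun k x => (h1 x).1 k, fun k x => (h2 x).1 k⟩, fun k x => (h1 x).2 k, fun k x => (h2 x).2 k⟩

theorem fr_off (a b : Fin m → Matrix Λ Λ ℂ) (s t : ℂ) (hs : s ≠ 0) (ht : t ≠ 0) (σ : ℂ)
    (h : FiniteDimensional ℂ (gk Z a b σ)) :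
    Module.finrank ℂ (gk Z
      (fun j => fromBlocks 0 (s • ((1 : Matrix κ κ ℂ) ⊗ₖ a j)) (t • ((1 : Matrix κ κ ℂ) ⊗ₖ a j)) 0)
      (fun j => fromBlocks 0 (s • ((1 : Matrix κ κ ℂ) ⊗ₖ b j)) (t • ((1 : Matrix κ κ ℂ) ⊗ₖ b j)) 0) σ) =
    2 * Fintype.card κ * Module.finrank ℂ (gk Z a b σ) := by
  rw [slice (Equiv.sumProdDistrib κ κ Λ) _ (fun i => gk Z a b σ)]
  · simp only [Finset.sum_const, Finset.card_univ, smul_eq_mul, Fintype.card_sum]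
    ring
  · exact fun _ => h
  · intro u
    rw [mem_gk, W_blocks, W_zero]
    simp only [Sum.forall, Sum.elim_inl, Sum.elim_inr, mem_gk, Prod.forall, Fintype.sum_sum_type,
      fromBlocks_apply₁₁, fromBlocks_apply₁₂, fromBlocks_apply₂₁, fromBlocks_apply₂₂, W_kron',
      Fintype.sum_prod_type, Matrix.zero_apply, _root_.zero_apply, Finset.sum_const_zero,
      add_zero, zero_add]
    have e1 : ∀ (s : ℂ) (F : Λ → (ell m →L[ℂ] ell m)) (w : κ → Λ → ell m) (x : κ),
      ∑ l, ∑ y, (if x = l then s • F y else 0) (w l y) = s • ∑ y, F y (w x y) := by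
      intro s F w x
      rw [Finset.sum_eq_single x]
      · simp [Finset.smul_sum]
      · intro b _ hb; simp [hb.symm]
      · simp
    simp only [e1 s (fun l => W Z a b 0 _ l) (fun l y => u (Sum.inr (l, y))),
      e1 t (fun l => W Z a b 0 _ l) (fun l y => u (Sum.inl (l, y))), smul_eq_zero, hs, ht, false_or]
    constructor
    · rintro ⟨⟨h1, h2⟩, h3, h4⟩
      exact ⟨fun x => ⟨fun k => h2 x k, fun k => h3 x k⟩, fun x => ⟨fun k => h1 x k, fun k => h4 x k⟩⟩
    · rintro ⟨h1, h2⟩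
      exact ⟨⟨fun k x => (h2 k).1 x, fun k x => (h1 k).1 x⟩, fun k x => (h1 k).2 x, fun k x => (h2 k).2 x⟩
end Slice
end HR

open Matrix

namespace HR
section Homot
open scoped ComplexConjugate ENNReal Kronecker ComplexOrder
set_option linter.unusedSectionVars false
set_option linter.unusedSimpArgs false
variable {m : ℕ} (Z : Fin m → ell m →L[ℂ] ell m)
variable {κ : Type} [Fintype κ] [DecidableEq κ]
variable {Λ : Type} [Fintype Λ] [DecidableEq Λ] {e : Fin m → Matrix Λ Λ ℂ} {v : Λ → ℂ}

theorem unit_XY {J : Type} [Fintype J] [DecidableEq J] (X Y : Matrix J J ℂ) (hX : IsUnit X)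
    (hY : Yᴴ * Y = 1) (hXY : Xᴴ * Y + Yᴴ * X = 0) (c s : ℝ) (hcs : c ^ 2 + s ^ 2 = 1) :
    IsUnit ((c : ℂ) • X + (s : ℂ) • Y) := by
  have e : ((c : ℂ) • X + (s : ℂ) • Y)ᴴ * ((c : ℂ) • X + (s : ℂ) • Y) =
      ((c ^ 2 : ℝ) : ℂ) • (Xᴴ * X) + ((s ^ 2 : ℝ) : ℂ) • 1 := by
    have h2 : Xᴴ * Y = - (Yᴴ * X) := eq_neg_of_add_eq_zero_left hXY
    simp only [conjTranspose_add, conjTranspose_smul, add_mul, mul_add, smul_mul_assoc, mul_smul_comm,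
      hY, h2, Complex.star_def, Complex.conj_ofReal]
    push_cast
    module
  have hp : (((c : ℂ) • X + (s : ℂ) • Y)ᴴ * ((c : ℂ) • X + (s : ℂ) • Y)).PosDef := by
    rw [e]
    by_cases hc : c = 0
    · have : s ^ 2 = 1 := by rw [hc] at hcs; linarith
      rw [hc, this]; simp [Matrix.PosDef.one]
    · apply Matrix.PosDef.add_posSemidef
      · apply Matrix.PosDef.smul
        · exact Matrix.PosDef.conjTranspose_mul_self _ (Matrix.mulVec_injective_of_isUnit hX)
        · exact_mod_cast (by positivity : 0 < c ^ 2)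
      · apply Matrix.PosSemidef.smul Matrix.PosSemidef.one
        exact_mod_cast (by positivity : 0 ≤ s ^ 2)
  have := hp.isUnit
  exact isUnit_of_mul_isUnit_right this

theorem sym_lin {J : Type} [Fintype J] [DecidableEq J] (c s : ℂ) (a b a' b' : Fin m → Matrix J J ℂ) (z : Fin m → ℂ) :
    sym (fun j => c • a j + s • a' j) (fun j => c • b j + s • b' j) 0 z =
      c • sym a b 0 z + s • sym a' b' 0 z := by
  simp only [sym, add_zero, Finset.smul_sum, ← Finset.sum_add_distrib]
  refine Finset.sum_congr rfl fun j _ => ?_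
  module

theorem sym_blocks {J : Type} [Fintype J] [DecidableEq J]
    (a11 a12 a21 a22 b11 b12 b21 b22 : Fin m → Matrix J J ℂ) (z : Fin m → ℂ) :
    sym (fun j => fromBlocks (a11 j) (a12 j) (a21 j) (a22 j))
      (fun j => fromBlocks (b11 j) (b12 j) (b21 j) (b22 j)) 0 z =
    fromBlocks (sym a11 b11 0 z) (sym a12 b12 0 z) (sym a21 b21 0 z) (sym a22 b22 0 z) := by
  ext1 i j
  cases i <;> cases j <;> simp [sym, Matrix.sum_apply]

theorem sym_zero {J : Type} [Fintype J] [DecidableEq J] (z : Fin m → ℂ) :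
    sym (fun _ => (0 : Matrix J J ℂ)) (fun _ => 0) 0 z = 0 := by
  simp [sym]

theorem sym_kron (a b : Fin m → Matrix κ κ ℂ) (z : Fin m → ℂ) :
    sym (fun j => a j ⊗ₖ (1 : Matrix Λ Λ ℂ)) (fun j => b j ⊗ₖ (1 : Matrix Λ Λ ℂ)) 0 z =
      sym a b 0 z ⊗ₖ (1 : Matrix Λ Λ ℂ) := by
  ext1 i j
  simp only [sym, Matrix.add_apply, Matrix.sum_apply, Matrix.smul_apply, kroneckerMap_apply,
    Matrix.zero_apply, add_zero, Finset.sum_mul, smul_eq_mul]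
  refine Finset.sum_congr rfl fun j _ => ?_
  ring

theorem sym_kron' (s : ℂ) (a b : Fin m → Matrix Λ Λ ℂ) (z : Fin m → ℂ) :
    sym (fun j => s • ((1 : Matrix κ κ ℂ) ⊗ₖ a j)) (fun j => s • ((1 : Matrix κ κ ℂ) ⊗ₖ b j)) 0 z =
      s • ((1 : Matrix κ κ ℂ) ⊗ₖ sym a b 0 z) := by
  ext1 i j
  simp only [sym, Matrix.add_apply, Matrix.sum_apply, Matrix.smul_apply, kroneckerMap_apply,
    Matrix.zero_apply, add_zero, Finset.mul_sum, smul_eq_mul]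
  refine Finset.sum_congr rfl fun j _ => ?_
  ring

theorem unit_path (B : Matrix κ κ ℂ) (c : Matrix Λ Λ ℂ) (hB : IsUnit B) (hc : cᴴ = c) (hcc : c * c = 1)
    (C S : ℝ) (h : C ^ 2 + S ^ 2 = 1) :
    IsUnit ((C : ℂ) • fromBlocks (B ⊗ₖ (1 : Matrix Λ Λ ℂ)) 0 0 (Bᴴ ⊗ₖ (1 : Matrix Λ Λ ℂ)) +
      (S : ℂ) • fromBlocks 0 ((-1 : ℂ) • ((1 : Matrix κ κ ℂ) ⊗ₖ c)) ((1 : ℂ) • ((1 : Matrix κ κ ℂ) ⊗ₖ c)) 0) := by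
  have kc : ∀ B : Matrix κ κ ℂ, (B ⊗ₖ (1 : Matrix Λ Λ ℂ))ᴴ = Bᴴ ⊗ₖ (1 : Matrix Λ Λ ℂ) := fun B => by
    rw [conjTranspose_kronecker, conjTranspose_one]
  have kc' : ((1 : Matrix κ κ ℂ) ⊗ₖ c)ᴴ = (1 : Matrix κ κ ℂ) ⊗ₖ c := by
    rw [conjTranspose_kronecker, conjTranspose_one, hc]
  apply unit_XY _ _ _ _ _ _ _ h
  · obtain ⟨B', h'⟩ := hB.exists_right_inv
    have h'' : B'  * B = 1 := _root_.mul_eq_one_comm.1 h'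
    refine IsUnit.of_mul_eq_one (fromBlocks (B' ⊗ₖ (1 : Matrix Λ Λ ℂ)) 0 0 (B'ᴴ ⊗ₖ (1 : Matrix Λ Λ ℂ))) ?_
    rw [fromBlocks_multiply]
    simp only [← mul_kronecker_mul, h', mul_one, ← conjTranspose_mul, h'', conjTranspose_one, mul_zero, zero_mul,
      add_zero, zero_add, one_kronecker_one, fromBlocks_one]
  · rw [fromBlocks_conjTranspose, fromBlocks_multiply]
    simp [conjTranspose_smul, kc', ← mul_kronecker_mul, hcc, -conjTranspose_kronecker]
  · rw [fromBlocks_conjTranspose, fromBlocks_conjTranspose, fromBlocks_multiply, fromBlocks_multiply]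
    simp [conjTranspose_smul, kc', kc, ← mul_kronecker_mul, hcc, -conjTranspose_kronecker, fromBlocks_add]

variable (a b : Fin m → Matrix κ κ ℂ)

variable (Λ) in
/-- diagonal end, a-part -/
def aX (a b : Fin m → Matrix κ κ ℂ) (j : Fin m) : Matrix ((κ × Λ) ⊕ (κ × Λ)) ((κ × Λ) ⊕ (κ × Λ)) ℂ :=
    fromBlocks (a j ⊗ₖ (1 : Matrix Λ Λ ℂ)) 0 0 ((b j)ᴴ ⊗ₖ (1 : Matrix Λ Λ ℂ))

variable (κ) in
/-- off-diagonal end -/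
def aY (s : ℂ) (e : Fin m → Matrix Λ Λ ℂ) (j : Fin m) : Matrix ((κ × Λ) ⊕ (κ × Λ)) ((κ × Λ) ⊕ (κ × Λ)) ℂ :=
    fromBlocks 0 ((-s : ℂ) • ((1 : Matrix κ κ ℂ) ⊗ₖ e j)) ((s : ℂ) • ((1 : Matrix κ κ ℂ) ⊗ₖ e j)) 0

theorem aX_star : (fun j => (aX Λ a b j)ᴴ) = aX Λ (fun j => (a j)ᴴ) (fun j => (b j)ᴴ) := by
  ext1 j
  simp only [aX, fromBlocks_conjTranspose, conjTranspose_kronecker, conjTranspose_one,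
    conjTranspose_zero, conjTranspose_conjTranspose]

theorem aY_star (s : ℝ) : (fun j => (aY κ (s : ℂ) e j)ᴴ) = aY κ (-s : ℂ) (fun j => (e j)ᴴ) := by
  ext1 j
  simp only [aY, fromBlocks_conjTranspose, conjTranspose_kronecker, conjTranspose_one,
    conjTranspose_zero, conjTranspose_smul, star_neg, Complex.star_def, Complex.conj_ofReal, neg_neg]

theorem gi_X (Fa : Fr (op (W Z a b 0))) (Fa' : Fr (op (W Z (fun j => (b j)ᴴ) (fun j => (a j)ᴴ) 0))) :
    gi Z (aX Λ a b) (aX Λ b a) =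
      Fintype.card Λ * (gi Z a b + gi Z (fun j => (b j)ᴴ) (fun j => (a j)ᴴ)) := by
  have e3 : (fun j => ((a j)ᴴ)ᴴ) = a := by simp
  have e4 : (fun j => ((b j)ᴴ)ᴴ) = b := by simp
  have h1 := fr_diag (Λ := Λ) Z a b (fun j => (b j)ᴴ) (fun j => (a j)ᴴ) 1
    (fd_gk Z _ _ Fa _) (fd_gk Z _ _ Fa' _)
  have h2 := fr_diag (Λ := Λ) Z (fun j => (b j)ᴴ) (fun j => (a j)ᴴ) (fun j => ((a j)ᴴ)ᴴ)
    (fun j => ((b j)ᴴ)ᴴ) (-1) (fd_gk Z _ _ Fa' _) (by rw [e3, e4]; exact fd_gk Z _ _ Fa _)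
  have h1' : Module.finrank ℂ (gk Z (aX Λ a b) (aX Λ b a) 1) = _ := h1
  have h2' : Module.finrank ℂ (gk Z (aX Λ (fun j => (b j)ᴴ) (fun j => (a j)ᴴ))
    (aX Λ (fun j => (a j)ᴴ) (fun j => (b j)ᴴ)) (-1)) = _ := h2
  rw [gi, aX_star, aX_star, h1', h2', gi, gi]
  push_cast
  ring

theorem gi_Y (hZ : ∀ j α, Z j (bas α) = (cc j α : ℂ) • bas (α + Pi.single j 1))
    (hcar : Car e v) (Fe : Fr (op (W Z e (fun j => (e j)ᴴ) 0))) :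
    gi Z (aY κ (1 : ℝ) e) (aY κ (1 : ℝ) (fun j => (e j)ᴴ)) = 2 * Fintype.card κ := by
  have e3 : (fun j => ((e j)ᴴ)ᴴ) = e := by simp
  have h1 := fr_off (κ := κ) Z e (fun j => (e j)ᴴ) (-((1:ℝ):ℂ)) ((1:ℝ):ℂ) (by norm_num) (by norm_num) 1 (fd_gk Z _ _ Fe _)
  have h2 := fr_off (κ := κ) Z e (fun j => (e j)ᴴ) (-(-((1:ℝ):ℂ))) (-((1:ℝ):ℂ)) (by norm_num) (by norm_num) (-1) (fd_gk Z _ _ Fe _)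
  rw [gk_c_one Z hZ hcar] at h1
  rw [gk_c_neg Z hZ hcar, finrank_bot] at h2
  have h1' : Module.finrank ℂ (gk Z (aY κ (1 : ℝ) e) (aY κ (1 : ℝ) (fun j => (e j)ᴴ)) 1) = _ := h1
  have h2' : Module.finrank ℂ (gk Z (aY κ (-(1 : ℝ) : ℂ) e) (aY κ (-(1 : ℝ) : ℂ) (fun j => (e j)ᴴ)) (-1)) = _ := h2
  rw [gi, aY_star, aY_star, e3, h1', h2']
  push_cast
  ring

theorem sym_X (z : Fin m → ℂ) : sym (aX Λ a b) (aX Λ b a) 0 z =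
    fromBlocks (sym a b 0 z ⊗ₖ (1 : Matrix Λ Λ ℂ)) 0 0 ((sym a b 0 z)ᴴ ⊗ₖ (1 : Matrix Λ Λ ℂ)) := by
  have := sym_blocks (fun j => a j ⊗ₖ (1 : Matrix Λ Λ ℂ)) (fun _ => 0) (fun _ => 0)
    (fun j => (b j)ᴴ ⊗ₖ (1 : Matrix Λ Λ ℂ)) (fun j => b j ⊗ₖ (1 : Matrix Λ Λ ℂ)) (fun _ => 0) (fun _ => 0)
    (fun j => (a j)ᴴ ⊗ₖ (1 : Matrix Λ Λ ℂ)) z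
  rw [sym_zero, sym_kron, sym_kron] at this
  rw [sym_star, conjTranspose_zero]
  exact this

theorem sym_Y (z : Fin m → ℂ) : sym (aY κ (1 : ℝ) e) (aY κ (1 : ℝ) (fun j => (e j)ᴴ)) 0 z =
    fromBlocks 0 ((-1 : ℂ) • ((1 : Matrix κ κ ℂ) ⊗ₖ sym e (fun j => (e j)ᴴ) 0 z))
        ((1 : ℂ) • ((1 : Matrix κ κ ℂ) ⊗ₖ sym e (fun j => (e j)ᴴ) 0 z)) 0 := by
  have := sym_blocks (fun _ => 0) (fun j => (-((1:ℝ):ℂ)) • (1 : Matrix κ κ ℂ) ⊗ₖ e j)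
    (fun j => ((1:ℝ):ℂ) • (1 : Matrix κ κ ℂ) ⊗ₖ e j) (fun _ => 0)
    (fun _ => 0) (fun j => (-((1:ℝ):ℂ)) • (1 : Matrix κ κ ℂ) ⊗ₖ (e j)ᴴ)
    (fun j => ((1:ℝ):ℂ) • (1 : Matrix κ κ ℂ) ⊗ₖ (e j)ᴴ) (fun _ => 0) z
  rw [sym_zero, sym_kron', sym_kron', Complex.ofReal_one] at this
  rw [← this]
  rw [Complex.ofReal_one]
  rfl

theorem path_eq {J : Type} [Fintype J] [DecidableEq J]
    (hZ : ∀ j α, Z j (bas α) = (cc j α : ℂ) • bas (α + Pi.single j 1))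
    (a b a' b' : Fin m → Matrix J J ℂ)
    (hT : ∀ θ : ℝ, Fr (op (W Z (fun j => (Real.cos θ : ℂ) • a j + (Real.sin θ : ℂ) • a' j)
    (fun j => (Real.cos θ : ℂ) • b j + (Real.sin θ : ℂ) • b' j) 0))) :
    gi Z a b = gi Z a' b' := by
  let T : ℝ → _ := fun θ => op (W Z (fun j => (Real.cos θ : ℂ) • a j + (Real.sin θ : ℂ) • a' j)
    (fun j => (Real.cos θ : ℂ) • b j + (Real.sin θ : ℂ) • b' j) 0)
  have hcont : Continuous T := by
    apply op_continuous
    intro k l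
    simp only [W, Matrix.smul_apply, Matrix.add_apply]
    fun_prop
  have h0 : T 0 = op (W Z a b 0) := by simp [T]
  have h1 : T (Real.pi / 2) = op (W Z a' b' 0) := by simp [T]
  have hodd : ∀ θ, T θ * Par m J = - (Par m J * T θ) := fun θ =>
    W_odd Z hZ (fun j => (Real.cos θ : ℂ) • a j + (Real.sin θ : ℂ) • a' j)
      (fun j => (Real.cos θ : ℂ) • b j + (Real.sin θ : ℂ) • b' j)
  have key := gind_path (Par m J) Par_adjoint Par_mul T hcont hodd hT 0 (Real.pi / 2)
  rw [h0, h1, ← gi_eq, ← gi_eq] at key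
  exact key

theorem count (hZ : ∀ j α, Z j (bas α) = (cc j α : ℂ) • bas (α + Pi.single j 1))
    (hFr : ∀ (κ : Type) [Fintype κ] [DecidableEq κ] (a b : Fin m → Matrix κ κ ℂ) (γ : Matrix κ κ ℂ),
      (∀ z : Fin m → ℂ, (∑ j, ‖z j‖ ^ 2 = 1) → IsUnit (sym a b γ z)) → Fr (op (W Z a b γ)))
    (hcar : Car e v) (a b : Fin m → Matrix κ κ ℂ)
    (h : ∀ (z : Fin m → ℂ), (∑ j, ‖z j‖ ^ 2 = 1) → IsUnit (sym a b 0 z))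
    (hs : gi Z a b = gi Z (fun j => (b j)ᴴ) (fun j => (a j)ᴴ)) :
    (Fintype.card κ : ℤ) = Fintype.card Λ * gi Z a b := by
  have key := path_eq Z hZ (aX Λ a b) (aX Λ b a) (aY κ (1 : ℝ) e) (aY κ (1 : ℝ) (fun j => (e j)ᴴ)) (by
    intro θ
    apply hFr
    intro z hz
    rw [sym_lin, sym_X, sym_Y]
    apply unit_path _ _ (h z hz) _ _ _ _ (Real.cos_sq_add_sin_sq θ)
    · rw [sym_star]; simp
    · rw [hcar.symSq, hz, one_smul])
  have Fa : Fr (op (W Z a b 0)) := hFr _ _ _ _ h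
  have Fa' : Fr (op (W Z (fun j => (b j)ᴴ) (fun j => (a j)ᴴ) 0)) := hFr _ _ _ _ fun z hz => by
    have := (h z hz).star
    rwa [star_eq_conjTranspose, sym_star, conjTranspose_zero] at this
  have Fe : Fr (op (W Z e (fun j => (e j)ᴴ) 0)) := hFr _ _ _ _ hcar.unit
  rw [gi_X Z a b Fa Fa', gi_Y Z hZ hcar Fe, ← hs] at key
  linarith

theorem dvd_card (hm : 0 < m) (a b : Fin m → Matrix κ κ ℂ) (C : Matrix κ κ ℂ)
    (h : ∀ (z : Fin m → ℂ) (t : ℝ), (∑ j, ‖z j‖ ^ 2 + t ^ 2 = 1) → IsUnit (sym a b ((t:ℂ) • C) z)) :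
    2 ^ m ∣ Fintype.card κ := by
  obtain ⟨Z, hZ, hFr⟩ := exists_Z m hm
  obtain ⟨Λ, _, _, e, v, hc, hcar⟩ := exists_car m
  have := count Z hZ hFr hcar a b (fun z hz => by simpa using h z 0 (by simpa using hz))
    (gi_symm Z hZ (hFr κ) a b C h)
  rw [hc] at this
  have h2 : ((2 ^ m : ℕ) : ℤ) ∣ (Fintype.card κ : ℤ) := ⟨_, this⟩
  exact Int.natCast_dvd_natCast.1 h2
end Homot

theorem two_three (N n m : ℕ) (hm : 0 < m) (hn : 2 * m + 1 ≤ n)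
    (B : EuclideanSpace ℝ (Fin n) →ₗ[ℝ] Matrix (Fin N) (Fin N) ℂ)
    (hB : ∀ v, v ≠ 0 → IsUnit (B v)) : 2 ^ m ∣ N := by
  obtain ⟨f⟩ : Nonempty ((Fin m ⊕ Fin m) ⊕ Unit ↪ Fin n) :=
    Function.Embedding.nonempty_of_card_le (by simp; omega)
  let E : (Fin m ⊕ Fin m) ⊕ Unit → Matrix (Fin N) (Fin N) ℂ := fun s => B (EuclideanSpace.single (f s) 1)
  have := dvd_card hm (fun j => (1/2 : ℂ) • (E (.inl (.inl j)) + Complex.I • E (.inl (.inr j))))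
    (fun j => (1/2 : ℂ) • (E (.inl (.inl j)) - Complex.I • E (.inl (.inr j)))) (E (.inr ())) ?_
  · simpa using this
  intro z t hz
  let w : (Fin m ⊕ Fin m) ⊕ Unit → ℝ := Sum.elim (Sum.elim (fun j => (z j).re) (fun j => (z j).im)) (fun _ => t)
  let x : EuclideanSpace ℝ (Fin n) := ∑ s, w s • EuclideanSpace.single (f s) (1:ℝ)
  have hx : ∀ s, x (f s) = w s := by
    intro s
    simp only [x, WithLp.ofLp_sum, WithLp.ofLp_smul, Finset.sum_apply, Pi.smul_apply]
    rw [Finset.sum_eq_single s]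
    · simp
    · intro b _ hb
      simp [hb, f.injective.eq_iff, Ne.symm hb]
    · simp
  have hx0 : x ≠ 0 := by
    intro h0
    have hw : ∀ s, w s = 0 := fun s => by rw [← hx, h0]; rfl
    have ht : t = 0 := hw (.inr ())
    have hzz : ∀ j, z j = 0 := fun j => Complex.ext (hw (.inl (.inl j))) (hw (.inl (.inr j)))
    simp [ht, hzz] at hz
  have hBx : B x = ∑ s, w s • E s := by
    show B (∑ s, w s • EuclideanSpace.single (f s) (1:ℝ)) = _
    rw [map_sum]
    exact Finset.sum_congr rfl fun s _ => map_smul _ _ _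
  have hu := hB x hx0
  rw [hBx] at hu
  convert hu using 1
  simp only [Fintype.sum_sum_type, sym]
  rw [← Finset.sum_add_distrib]
  congr 1
  · refine Finset.sum_congr rfl fun j _ => ?_
    show _ = (z j).re • E (.inl (.inl j)) + (z j).im • E (.inl (.inr j))
    ext k l
    simp only [Matrix.add_apply, Matrix.sub_apply, Matrix.smul_apply, smul_eq_mul, Complex.real_smul]
    have h1 : z j = (z j).re + (z j).im * Complex.I := (Complex.re_add_im _).symm
    have h2 : (starRingEnd ℂ) (z j) = (z j).re - (z j).im * Complex.I := by
      exact Complex.ext (by simp) (by simp)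
    rw [h2]
    nth_rewrite 3 [h1]
    ring_nf
    simp
  · simp [w, E]
end HR

open Matrix

namespace HR
section Constr
open scoped ComplexConjugate Kronecker

theorem exists_cliff (a : ℕ) : ∃ (J : Type) (_ : Fintype J) (_ : DecidableEq J)
    (ι : Type) (_ : Fintype ι) (B : (ι → ℝ) →ₗ[ℝ] Matrix J J ℂ), Fintype.card J = 2 ^ a ∧
    Fintype.card ι = 2 * a + 2 ∧
    (∀ u, (B u)ᴴ * B u = ((∑ i, u i ^ 2 : ℝ) : ℂ) • 1) ∧
    (∀ u, B u * (B u)ᴴ = ((∑ i, u i ^ 2 : ℝ) : ℂ) • 1) := by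
  induction a with
  | zero =>
    refine ⟨Unit, inferInstance, inferInstance, Fin 2, inferInstance,
      { toFun := fun u => ((u 0 : ℂ) + u 1 * Complex.I) • 1
        map_add' := fun u w => by
          simp only [Pi.add_apply, Complex.ofReal_add]; module
        map_smul' := fun c u => by
          ext; simp [mul_assoc, mul_add] }, by simp, by simp, ?_, ?_⟩
    · intro u
      ext i j
      apply Complex.ext <;> simp [Fin.sum_univ_two, Matrix.mul_apply, pow_two] <;> ring
    · intro u
      ext i j
      apply Complex.ext <;> simp [Fin.sum_univ_two, Matrix.mul_apply, pow_two] <;> ring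
  | succ a ih =>
    obtain ⟨J, _, _, ι, _, B, hJ, hι, h1, h2⟩ := ih
    have key : ∀ (w : ℂ) (M : Matrix J J ℂ) (r : ℂ), Mᴴ * M = r • 1 → M * Mᴴ = r • 1 →
        (fromBlocks (w • (1 : Matrix J J ℂ)) M (-Mᴴ) (conj w • (1 : Matrix J J ℂ)))ᴴ *
          fromBlocks (w • (1 : Matrix J J ℂ)) M (-Mᴴ) (conj w • (1 : Matrix J J ℂ)) = (r + w * conj w) • 1 ∧
        fromBlocks (w • (1 : Matrix J J ℂ)) M (-Mᴴ) (conj w • (1 : Matrix J J ℂ)) *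
        (fromBlocks (w • (1 : Matrix J J ℂ)) M (-Mᴴ) (conj w • (1 : Matrix J J ℂ)))ᴴ = (r + w * conj w) • 1 := by
      intro w M r h1 h2
      rw [fromBlocks_conjTranspose, fromBlocks_multiply, fromBlocks_multiply, ← fromBlocks_one, fromBlocks_smul]
      simp only [conjTranspose_smul, conjTranspose_one, conjTranspose_neg, conjTranspose_conjTranspose,
        smul_mul_assoc, mul_smul_comm, one_mul, mul_one, neg_mul, mul_neg, h1, h2, neg_neg, Complex.star_def,
        Complex.conj_conj, smul_zero]
      constructor <;> congr 1 <;> module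
    have hw : ∀ p q : ℝ, ((p : ℂ) + q * Complex.I) * conj ((p : ℂ) + q * Complex.I) = ((p ^ 2 + q ^ 2 : ℝ) : ℂ) := by
      intro p q
      apply Complex.ext <;> simp [pow_two] <;> ring
    refine ⟨J ⊕ J, inferInstance, inferInstance, ι ⊕ Fin 2, inferInstance,
      { toFun := fun u => fromBlocks (((u (.inr 0) : ℂ) + u (.inr 1) * Complex.I) • 1) (B fun i => u (.inl i))
          (-(B fun i => u (.inl i))ᴴ) (conj ((u (.inr 0) : ℂ) + u (.inr 1) * Complex.I) • 1)
        map_add' := fun u w => by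
          have e : (B fun i => (u + w) (.inl i)) = (B fun i => u (.inl i)) + B fun i => w (.inl i) := by
            rw [← map_add]; rfl
          rw [e, fromBlocks_add]
          simp only [Pi.add_apply, Complex.ofReal_add, conjTranspose_add, map_add, map_mul]
          congr 1 <;> module
        map_smul' := fun c u => by
          have e : (B fun i => (c • u) (.inl i)) = c • (B fun i => u (.inl i)) := by
            rw [← map_smul]; rfl
          rw [e, RingHom.id_apply, fromBlocks_smul]
          congr 1
          · ext; simp; ring
          · simp [conjTranspose_smul]
          · ext; simp; ring }, ?_, ?_, ?_, ?_⟩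
    · simp [hJ]; ring
    · simp [hι]; ring
    · intro u
      refine (key _ _ _ (h1 _) (h2 _)).1.trans ?_
      rw [hw, Fintype.sum_sum_type, Fin.sum_univ_two]
      push_cast; rfl
    · intro u
      refine (key _ _ _ (h1 _) (h2 _)).2.trans ?_
      rw [hw, Fintype.sum_sum_type, Fin.sum_univ_two]
      push_cast; rfl

theorem three_one (N n a : ℕ) (hN : 2 ^ a ∣ N) (hn : n ≤ 2 * a + 2) :
    ∃ B : EuclideanSpace ℝ (Fin n) →ₗ[ℝ] Matrix (Fin N) (Fin N) ℂ,
      ∀ v, (B v)ᴴ * B v = (‖v‖ ^ 2 : ℝ) • 1 := by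
  obtain ⟨J, _, _, ι, _, B, hJ, hι, h1, -⟩ := exists_cliff a
  obtain ⟨q, rfl⟩ := hN
  obtain ⟨f⟩ : Nonempty (Fin n ↪ ι) := Function.Embedding.nonempty_of_card_le (by simp [hι, hn])
  obtain ⟨g⟩ : Nonempty (J × Fin q ≃ Fin (2 ^ a * q)) := by
    rw [← Fintype.card_eq]; simp [hJ]
  let U : EuclideanSpace ℝ (Fin n) →ₗ[ℝ] (ι → ℝ) :=
    Function.ExtendByZero.linearMap ℝ f ∘ₗ (WithLp.linearEquiv 2 ℝ (Fin n → ℝ)).toLinearMap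
  have hU : ∀ v, ∑ i, U v i ^ 2 = ‖v‖ ^ 2 := by
    intro v
    rw [EuclideanSpace.norm_sq_eq]
    symm
    refine (Finset.sum_of_injOn f f.injective.injOn (by simp) ?_ ?_)
    · intro i _ hi
      have : U v i = 0 := by
        refine Function.extend_apply' _ _ _ ?_
        rintro ⟨j, rfl⟩
        exact hi (by simp)
      rw [this]; simp
    · intro j _
      have : U v (f j) = v j := f.injective.extend_apply _ _ _
      rw [this, Real.norm_eq_abs, sq_abs]
  let T : Matrix J J ℂ →ₗ[ℝ] Matrix (Fin (2 ^ a * q)) (Fin (2 ^ a * q)) ℂ :=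
    { toFun := fun M => (M ⊗ₖ (1 : Matrix (Fin q) (Fin q) ℂ)).submatrix g.symm g.symm
      map_add' := fun M M' => by ext; simp [add_mul]
      map_smul' := fun c M => by ext; simp [mul_assoc] }
  have hT : ∀ M (r : ℝ), Mᴴ * M = (r : ℂ) • 1 → (T M)ᴴ * T M = r • 1 := by
    intro M r h
    show ((M ⊗ₖ (1 : Matrix (Fin q) (Fin q) ℂ)).submatrix g.symm g.symm)ᴴ *
      (M ⊗ₖ (1 : Matrix (Fin q) (Fin q) ℂ)).submatrix g.symm g.symm = _
    rw [conjTranspose_submatrix, submatrix_mul_equiv, conjTranspose_kronecker, ← mul_kronecker_mul, h,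
      conjTranspose_one, mul_one, smul_kronecker, one_kronecker_one, submatrix_smul]
    show (r : ℂ) • (1 : Matrix (J × Fin q) (J × Fin q) ℂ).submatrix g.symm g.symm = _
    rw [submatrix_one_equiv]
    ext; simp
  refine ⟨T ∘ₗ B ∘ₗ U, fun v => ?_⟩
  rw [← hU]
  exact hT _ _ (h1 _)
end Constr
end HR

/-- Entry `𝔤 = 𝔰𝔲(N,N)` of the Hurwitz–Radon value theorem
(via the `𝔭`-part of block matrices `[[0,B],[Bᴴ,0]]`):
`ρ⁽¹⁾ = ρ⁽²⁾ = 2·ord₂(N) + 2`, the Adams–Lax–Phillips number `ℂ(N)`. -/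
theorem hurwitzRadon_su_N_N (N : ℕ) (hN : 1 ≤ N) (n : ℕ) :
    ((∃ B : EuclideanSpace ℝ (Fin n) →ₗ[ℝ] Matrix (Fin N) (Fin N) ℂ,
        ∀ v, (B v)ᴴ * B v = (‖v‖ ^ 2 : ℝ) • (1 : Matrix (Fin N) (Fin N) ℂ)) ↔
      (∃ B : EuclideanSpace ℝ (Fin n) →ₗ[ℝ] Matrix (Fin N) (Fin N) ℂ,
        ∀ v, v ≠ 0 → IsUnit (B v))) ∧
    ((∃ B : EuclideanSpace ℝ (Fin n) →ₗ[ℝ] Matrix (Fin N) (Fin N) ℂ,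
        ∀ v, v ≠ 0 → IsUnit (B v)) ↔
      n ≤ 2 * padicValNat 2 N + 2) := by
  have h12 : (∃ B : EuclideanSpace ℝ (Fin n) →ₗ[ℝ] Matrix (Fin N) (Fin N) ℂ,
        ∀ v, (B v)ᴴ * B v = (‖v‖ ^ 2 : ℝ) • 1) → (∃ B : EuclideanSpace ℝ (Fin n) →ₗ[ℝ] Matrix (Fin N) (Fin N) ℂ,
        ∀ v, v ≠ 0 → IsUnit (B v)) := by
    rintro ⟨B, hB⟩
    refine ⟨B, fun v hv => ?_⟩
    have hv' : ‖v‖ ^ 2 ≠ 0 := by positivity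
    have : (((‖v‖ ^ 2)⁻¹ : ℝ) • (B v)ᴴ) * B v = 1 := by
      rw [smul_mul_assoc, hB, smul_smul, inv_mul_cancel₀ hv', one_smul]
    exact IsUnit.of_mul_eq_one_right _ this
  have h23 : (∃ B : EuclideanSpace ℝ (Fin n) →ₗ[ℝ] Matrix (Fin N) (Fin N) ℂ,
        ∀ v, v ≠ 0 → IsUnit (B v)) → n ≤ 2 * padicValNat 2 N + 2 := by
    rintro ⟨B, hB⟩
    by_contra! hn
    have h := HR.two_three N n (padicValNat 2 N + 1) (by omega) (by omega) B hB
    exact pow_succ_padicValNat_not_dvd (p := 2) (by omega) h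
  have h31 := HR.three_one N n (padicValNat 2 N) pow_padicValNat_dvd
  exact ⟨⟨h12, fun h => h31 (h23 h)⟩, h23, fun h => h12 (h31 h)⟩
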